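/- Let q be a prime power with q > 2 and let S be an algebraic hypersurface of PG(6,q^2) of degree q+1 defined over GF(q^2), not containing any solid, with exactly q^11 + q^9 + q^7 + q^4 + q^2 + 1 rational points, and let Sigma_3 be a solid with |S ∩ Sigma_3| = q^4 + q^2 + 1. Then every 4-dimensional projective subspace Sigma_4 of PG(6,q^2) containing Sigma_3 meets S in a Hermitian cone with vertex a line and base a non-singular Hermitian curve; in particular |S ∩ Sigma_4| = q^7 + q^4 + q^2 + 1. -/

import Mathlib

open MvPolynomial Module

/-- The set of points of the projective subspace of `PG(n-1, F)` determined by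
the linear subspace `W` of `F^n`. -/
def projPts {F : Type} [Field F] {n : ℕ} (W : Submodule F (Fin n → F)) :
    Set (Projectivization F (Fin n → F)) :=
  {P | P.submodule ≤ W}

/-- The set of `F`-rational points of the hypersurface of `PG(n-1, F)` defined by the
homogeneous polynomial `f`. -/
def hypersurfacePts {F : Type} [Field F] {n : ℕ} (f : MvPolynomial (Fin n) F) :
    Set (Projectivization F (Fin n → F)) :=
  {P | MvPolynomial.eval P.rep f = 0}


/-- `η` is a Hermitian (sesquilinear) form with respect to the involution `x ↦ x^q`:
additive in each argument, `F`-linear in the first, with `η w v = (η v w)^q`. -/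
def IsHermitianForm (q : ℕ) {F : Type} [Field F] {V : Type} [AddCommGroup V] [Module F V]
    (η : V → V → F) : Prop :=
  (∀ u v w, η (u + v) w = η u w + η v w) ∧
  (∀ u v w, η u (v + w) = η u v + η u w) ∧
  (∀ (a : F) (v w : V), η (a • v) w = a * η v w) ∧
  (∀ v w, η w v = (η v w) ^ q)

/-- The radical of the form `η` restricted to the subspace `W` has dimension `k`. -/
def HasRadicalDimOn {F : Type} [Field F] {n : ℕ}
    (η : (Fin n → F) → (Fin n → F) → F) (W : Submodule F (Fin n → F)) (k : ℕ) : Prop :=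
  ∃ R : Submodule F (Fin n → F), R ≤ W ∧ Module.finrank F R = k ∧
    ∀ v ∈ W, (v ∈ R ↔ ∀ w ∈ W, η v w = 0)

/-- `X` is the Hermitian variety of the projective subspace determined by `W` cut out by a
Hermitian form whose radical on `W` has dimension `k` (a non-singular Hermitian variety
if `k = 0`, a Hermitian cone with vertex of projective dimension `k - 1` otherwise). -/
def IsHermitianConeOn (q : ℕ) {F : Type} [Field F] {n : ℕ}
    (W : Submodule F (Fin n → F)) (k : ℕ)
    (X : Set (Projectivization F (Fin n → F))) : Prop :=
  ∃ η : (Fin n → F) → (Fin n → F) → F, IsHermitianForm q η ∧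
    HasRadicalDimOn η W k ∧
    X = {P | P.submodule ≤ W ∧ η P.rep P.rep = 0}

/-!
Let `W` be the special subspace of `F ^ (2m+1)`, `|F| = q ^ 2`; here `m = 3`.

The zeros on `W` form a subspace `P`. Otherwise, by the Bose–Burton theorem, some line of `W`
contains no zeros, and an averaging argument over its cosets outside `W` yields a plane curve of
degree `q + 1` with no point at infinity and at least `q ^ 3` affine points. Such a curve is
irreducible, and its Frobenius polar `∑ Xᵢ ^ (q ^ 2) ∂ᵢ f` meets it with multiplicity at least two
in each of these points, which contradicts Bézout's theorem.

On a coset `a + P` outside `W` the degree of `f` drops to `q`, since `f` vanishes on `P`, so such a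
coset contains at most `q * |P| / |F|` zeros, and the point count forces equality. A polynomial
attaining the Schwartz–Zippel bound depends on a single linear functional. Comparing cosets by
means of the polars of `f` gives `f (u + w + x) = L x ^ q + c * L x + f (u + w)` for `x ∈ P` and
`w ∈ W`, where `c ^ (q + 1) = 1`. As every coset contains zeros,
`f (u + w) ^ q = c ^ q * f (u + w)`, and so `f` is on `W + ⟨u⟩` a scalar multiple of a Hermitian
form of rank three.
-/

section Lines

variable {R σ : Type*} [CommRing R]

theorem eval_smul_of_isHomogeneous {f : MvPolynomial σ R} {n : ℕ} (hf : f.IsHomogeneous n)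
    (c : R) (v : σ → R) : eval (c • v) f = c ^ n * eval v f := by
  simp only [eval_eq, Finset.mul_sum]
  refine Finset.sum_congr rfl fun d hd => ?_
  have hdeg : ∑ i ∈ d.support, d i = n := (hf.degree_eq_sum_deg_support hd).symm
  simp only [Pi.smul_apply, smul_eq_mul, mul_pow, Finset.prod_mul_distrib,
    Finset.prod_pow_eq_pow_sum, hdeg]
  ring

/-- The restriction `f (a + b T)` of a polynomial `f` to the parametrised line `a + b T`, as a
univariate polynomial in `T`. -/
noncomputable def restrictLine (a b : σ → R) (f : MvPolynomial σ R) : Polynomial R :=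
  aeval (fun i => Polynomial.C (a i) + Polynomial.C (b i) * Polynomial.X) f

theorem restrictLine_add (a b : σ → R) (f g : MvPolynomial σ R) :
    restrictLine a b (f + g) = restrictLine a b f + restrictLine a b g :=
  map_add _ f g

theorem restrictLine_mul (a b : σ → R) (f g : MvPolynomial σ R) :
    restrictLine a b (f * g) = restrictLine a b f * restrictLine a b g :=
  map_mul _ f g

theorem natDegree_restrictLine_le (a b : σ → R) (f : MvPolynomial σ R) :
    (restrictLine a b f).natDegree ≤ f.totalDegree := by
  simpa [restrictLine] using aeval_natDegree_le f le_rfl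
    (fun i => Polynomial.C (a i) + Polynomial.C (b i) * Polynomial.X) (n := 1)
    fun i => by compute_degree

theorem eval_restrictLine (a b : σ → R) (f : MvPolynomial σ R) (t : R) :
    (restrictLine a b f).eval t = eval (a + t • b) f := by
  have hcomp : (Polynomial.evalRingHom t).comp
      (aeval fun i => Polynomial.C (a i) + Polynomial.C (b i) * Polynomial.X :
        MvPolynomial σ R →ₐ[R] Polynomial R).toRingHom = eval (a + t • b) := by
    ext i
    · simp
    · simp [mul_comm t]
  exact congrArg (fun φ : MvPolynomial σ R →+* R => φ f) hcomp

theorem coeff_zero_restrictLine (a b : σ → R) (f : MvPolynomial σ R) :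
    (restrictLine a b f).coeff 0 = eval a f := by
  rw [Polynomial.coeff_zero_eq_eval_zero, eval_restrictLine, zero_smul, add_zero]

theorem reflect_prod_linear_pow (a b : σ → R) (d : σ → ℕ) (s : Finset σ) :
    (∏ i ∈ s, (Polynomial.C (a i) + Polynomial.C (b i) * Polynomial.X) ^ d i).reflect (∑ i ∈ s, d i)
      = ∏ i ∈ s, (Polynomial.C (b i) + Polynomial.C (a i) * Polynomial.X) ^ d i := by
  classical
  have hlin (i : σ) : (Polynomial.C (a i) + Polynomial.C (b i) * Polynomial.X).natDegree ≤ 1 := by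
    compute_degree
  have hpow (i : σ) (k : ℕ) :
      ((Polynomial.C (a i) + Polynomial.C (b i) * Polynomial.X) ^ k).natDegree ≤ k := by
    simpa using Polynomial.natDegree_pow_le_of_le k (hlin i)
  have hreflect (i : σ) (k : ℕ) :
      ((Polynomial.C (a i) + Polynomial.C (b i) * Polynomial.X) ^ k).reflect k =
        (Polynomial.C (b i) + Polynomial.C (a i) * Polynomial.X) ^ k := by
    induction k with
    | zero => simp
    | succ k ih =>
      rw [pow_succ, Polynomial.reflect_mul _ _ (hpow i k) (hlin i), ih, pow_succ,
        Polynomial.reflect_add, Polynomial.reflect_C, Polynomial.reflect_C_mul,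
        Polynomial.reflect_one_X, pow_one, mul_one, add_comm (Polynomial.C (b i))]
  induction s using Finset.induction_on with
  | empty => simp
  | insert i s hi ih =>
    rw [Finset.prod_insert hi, Finset.prod_insert hi, Finset.sum_insert hi,
      Polynomial.reflect_mul _ _ (hpow i _) ((Polynomial.natDegree_prod_le _ _).trans
        (Finset.sum_le_sum fun j _ => hpow j _)), ih, hreflect]

theorem reflect_restrictLine {f : MvPolynomial σ R} {n : ℕ} (hf : f.IsHomogeneous n)
    (a b : σ → R) : (restrictLine a b f).reflect n = restrictLine b a f := by
  have hsum (a b : σ → R) : restrictLine a b f = ∑ d ∈ f.support, Polynomial.C (coeff d f) *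
      ∏ i ∈ d.support, (Polynomial.C (a i) + Polynomial.C (b i) * Polynomial.X) ^ d i := by
    rw [restrictLine, aeval_def, eval₂_eq, Polynomial.algebraMap_eq]
  have hadd (s : Finset (σ →₀ ℕ)) (p : (σ →₀ ℕ) → Polynomial R) :
      (∑ d ∈ s, p d).reflect n = ∑ d ∈ s, (p d).reflect n := by
    ext k
    simp [Polynomial.coeff_reflect]
  rw [hsum a b, hsum b a, hadd]
  refine Finset.sum_congr rfl fun d hd => ?_
  have hdeg : ∑ i ∈ d.support, d i = n := (hf.degree_eq_sum_deg_support hd).symm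
  rw [Polynomial.reflect_C_mul, ← hdeg, reflect_prod_linear_pow]

theorem coeff_restrictLine_swap {f : MvPolynomial σ R} {n k : ℕ} (hf : f.IsHomogeneous n)
    (hk : k ≤ n) (a b : σ → R) :
    (restrictLine a b f).coeff k = (restrictLine b a f).coeff (n - k) := by
  rw [← reflect_restrictLine hf b a, Polynomial.coeff_reflect, Polynomial.revAt_le hk]

theorem coeff_restrictLine_of_isHomogeneous {f : MvPolynomial σ R} {n : ℕ}
    (hf : f.IsHomogeneous n) (a b : σ → R) : (restrictLine a b f).coeff n = eval b f := by
  rw [coeff_restrictLine_swap hf le_rfl, Nat.sub_self, coeff_zero_restrictLine]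

end Lines

section Derivations

variable {R σ : Type*} [CommRing R]

/-- The derivative of a polynomial in the constant direction `v`. -/
noncomputable def directionalDeriv (v : σ → R) :
    Derivation R (MvPolynomial σ R) (MvPolynomial σ R) :=
  mkDerivation R fun i => C (v i)

theorem coeff_one_restrictLine (x v : σ → R) (f : MvPolynomial σ R) :
    (restrictLine x v f).coeff 1 = eval x (directionalDeriv v f) := by
  induction f using MvPolynomial.induction_on with
  | C c =>
    simp [restrictLine, Polynomial.algebraMap_eq]
  | add f g hf hg =>
    rw [restrictLine_add, Polynomial.coeff_add, hf, hg, map_add, map_add]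
  | mul_X f i hf =>
    have hX : restrictLine x v (X i) = Polynomial.C (x i) + Polynomial.C (v i) * Polynomial.X :=
      aeval_X _ i
    have hD : directionalDeriv v (X i) = C (v i) := mkDerivation_X ..
    rw [restrictLine_mul, Polynomial.mul_coeff_one, hf, coeff_zero_restrictLine, hX,
      Derivation.leibniz, hD]
    simp
    ring

theorem mkDerivation_eq_sum_pderiv [Fintype σ] (v : σ → MvPolynomial σ R) (f : MvPolynomial σ R) :
    mkDerivation R v f = ∑ i, v i * pderiv i f := by
  classical
  have hsum (g : MvPolynomial σ R) :
      (∑ i, v i • pderiv i : Derivation R (MvPolynomial σ R) (MvPolynomial σ R)) g =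
        ∑ i, v i * pderiv i g :=
    (congrFun (map_sum Derivation.coeFnAddMonoidHom (fun i => v i • pderiv i) Finset.univ) g).trans
      (Finset.sum_apply ..)
  rw [← hsum, derivation_ext (D₁ := mkDerivation R v) fun j => ?_]
  simp [hsum, pderiv_X, Pi.single_apply]

theorem eval_directionalDeriv [Fintype σ] (x v : σ → R) (f : MvPolynomial σ R) :
    eval x (directionalDeriv v f) = ∑ i, v i * eval x (pderiv i f) := by
  simp [directionalDeriv, mkDerivation_eq_sum_pderiv]

/-- The derivative of `f` at `x` as a linear functional of the direction. -/
noncomputable def polarForm [Fintype σ] (f : MvPolynomial σ R) (x : σ → R) : (σ → R) →ₗ[R] R where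
  toFun v := eval x (directionalDeriv v f)
  map_add' v w := by simp only [eval_directionalDeriv, Pi.add_apply, add_mul,
    Finset.sum_add_distrib]
  map_smul' c v := by simp [eval_directionalDeriv, Finset.mul_sum, mul_assoc]

theorem polarForm_apply [Fintype σ] (f : MvPolynomial σ R) (x v : σ → R) :
    polarForm f x v = eval x (directionalDeriv v f) := rfl

theorem isHomogeneous_mkDerivation [Finite σ] {v : σ → MvPolynomial σ R}
    {f : MvPolynomial σ R} {m n : ℕ} (hv : ∀ i, (v i).IsHomogeneous m) (hf : f.IsHomogeneous n) :
    (mkDerivation R v f).IsHomogeneous (m + (n - 1)) := by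
  have := Fintype.ofFinite σ
  rw [mkDerivation_eq_sum_pderiv]
  exact IsHomogeneous.sum _ _ _ fun i _ => (hv i).mul hf.pderiv

theorem isHomogeneous_directionalDeriv [Finite σ] {f : MvPolynomial σ R} {n : ℕ}
    (hf : f.IsHomogeneous n) (v : σ → R) : (directionalDeriv v f).IsHomogeneous (n - 1) := by
  simpa [directionalDeriv] using isHomogeneous_mkDerivation (fun i => isHomogeneous_C σ (v i)) hf

theorem eval_directionalDeriv_self [Finite σ] {f : MvPolynomial σ R} {n : ℕ}
    (hf : f.IsHomogeneous n) (x : σ → R) : eval x (directionalDeriv x f) = n * eval x f := by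
  have := Fintype.ofFinite σ
  have heuler := congrArg (eval x) hf.sum_X_mul_pderiv
  simpa [eval_directionalDeriv] using heuler

end Derivations

section FrobeniusPolar

variable {F σ : Type*} [Field F] [Fintype F]

/-- The polar of `f` with respect to the Frobenius image of the generic point, that is
`∑ X_i ^ |F| ∂f/∂X_i`: its zeros are the points `P` of `f = 0` over an extension of `F` whose
Frobenius image lies on the tangent space at `P`. -/
noncomputable def frobeniusPolar : Derivation F (MvPolynomial σ F) (MvPolynomial σ F) :=
  mkDerivation F fun i => X i ^ Fintype.card F

theorem isHomogeneous_frobeniusPolar [Finite σ] {f : MvPolynomial σ F} {n : ℕ}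
    (hf : f.IsHomogeneous n) :
    (frobeniusPolar f).IsHomogeneous (Fintype.card F + (n - 1)) :=
  isHomogeneous_mkDerivation (fun i => isHomogeneous_X_pow i _) hf

theorem eval_frobeniusPolar [Finite σ] {f : MvPolynomial σ F} {n : ℕ}
    (hf : f.IsHomogeneous n) (x : σ → F) :
    eval x (frobeniusPolar f) = n * eval x f := by
  have := Fintype.ofFinite σ
  rw [← eval_directionalDeriv_self hf, eval_directionalDeriv, frobeniusPolar,
    mkDerivation_eq_sum_pderiv]
  simp [FiniteField.pow_card]

theorem directionalDeriv_frobeniusPolar (v : σ → F) (f : MvPolynomial σ F) :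
    directionalDeriv v (frobeniusPolar f) = frobeniusPolar (directionalDeriv v f) := by
  have hcomm : ⁅directionalDeriv v, (frobeniusPolar : Derivation F (MvPolynomial σ F) _)⁆ = 0 := by
    refine derivation_ext fun i => ?_
    have hcard : (Fintype.card F : MvPolynomial σ F) = 0 := by
      rw [← map_natCast (C : F →+* MvPolynomial σ F), Nat.cast_card_eq_zero, map_zero]
    simp [Derivation.commutator_apply, directionalDeriv, frobeniusPolar, Derivation.leibniz_pow,
      hcard]
  simpa [Derivation.commutator_apply, sub_eq_zero] using congrArg (· f) hcomm

theorem eval_directionalDeriv_frobeniusPolar [Finite σ] {f : MvPolynomial σ F} {n : ℕ}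
    (hf : f.IsHomogeneous n) (hn : ((n - 1 : ℕ) : F) = 0) (x v : σ → F) :
    eval x (directionalDeriv v (frobeniusPolar f)) = 0 := by
  rw [directionalDeriv_frobeniusPolar,
    eval_frobeniusPolar (isHomogeneous_directionalDeriv hf v), hn, zero_mul]

theorem prod_X_sub_C_eq_X_pow_card_sub_X :
    ∏ a : F, (Polynomial.X - Polynomial.C a) = Polynomial.X ^ Fintype.card F - Polynomial.X := by
  have hroots := FiniteField.roots_X_pow_card_sub_X F
  have hcard : 1 < Fintype.card F := Fintype.one_lt_card
  have hprod := Polynomial.prod_multiset_X_sub_C_of_monic_of_roots_card_eq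
    (p := (Polynomial.X ^ Fintype.card F - Polynomial.X : Polynomial F))
    (Polynomial.monic_X_pow_sub (by simpa using hcard))
    (by rw [hroots, FiniteField.X_pow_card_sub_X_natDegree_eq F hcard]; rfl)
  rwa [hroots] at hprod

theorem isCoprime_X_pow_card_sub_X {p : Polynomial F} (hp : ∀ a, p.eval a ≠ 0) :
    IsCoprime p (Polynomial.X ^ Fintype.card F - Polynomial.X) := by
  rw [← prod_X_sub_C_eq_X_pow_card_sub_X]
  refine IsCoprime.prod_right fun a _ =>
    ((Polynomial.irreducible_X_sub_C a).coprime_iff_not_dvd.mpr ?_).symm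
  rw [Polynomial.dvd_iff_isRoot]
  exact hp a

theorem restrictLine_frobeniusPolar [Finite σ] {f : MvPolynomial σ F} {n : ℕ}
    (hf : f.IsHomogeneous n) (a b : σ → F) :
    restrictLine a b (frobeniusPolar f) = (n : Polynomial F) * restrictLine a b f +
      (Polynomial.X ^ Fintype.card F - Polynomial.X) * restrictLine a b (directionalDeriv b f) := by
  have := Fintype.ofFinite σ
  set θ : MvPolynomial σ F →ₐ[F] Polynomial F :=
    aeval fun i => Polynomial.C (a i) + Polynomial.C (b i) * Polynomial.X
  have hX (i : σ) : θ (X i) = Polynomial.C (a i) + Polynomial.C (b i) * Polynomial.X :=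
    aeval_X _ i
  have heuler : (n : Polynomial F) * θ f = ∑ i, θ (X i) * θ (pderiv i f) := by
    simpa using (congrArg θ hf.sum_X_mul_pderiv).symm
  have hpow (i : σ) : θ (X i) ^ Fintype.card F =
      Polynomial.C (a i) + Polynomial.C (b i) * Polynomial.X ^ Fintype.card F := by
    rw [hX, ← FiniteField.expand_card, map_add, map_mul, Polynomial.expand_X, Polynomial.expand_C,
      Polynomial.expand_C]
  change θ (frobeniusPolar f) = (n : Polynomial F) * θ f + _ * θ (directionalDeriv b f)
  rw [heuler, frobeniusPolar, directionalDeriv, mkDerivation_eq_sum_pderiv,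
    mkDerivation_eq_sum_pderiv, map_sum, map_sum, Finset.mul_sum, ← Finset.sum_add_distrib]
  refine Finset.sum_congr rfl fun i _ => ?_
  rw [map_mul, map_mul, map_pow, hpow, hX, algHom_C, Polynomial.algebraMap_eq]
  ring

theorem not_dvd_frobeniusPolar [Finite σ] {f : MvPolynomial σ F} {n : ℕ} (hf : f.IsHomogeneous n)
    (hn : (n : F) ≠ 0) {a b : σ → F} (ha : ∀ t : F, eval (a + t • b) f ≠ 0) (hb : eval b f ≠ 0) :
    ¬ f ∣ frobeniusPolar f := by
  rintro ⟨g, hg⟩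
  have hcoprime := isCoprime_X_pow_card_sub_X (p := restrictLine a b f) fun t => by
    rw [eval_restrictLine]; exact ha t
  have hdvd : restrictLine a b f ∣ restrictLine a b (directionalDeriv b f) := by
    refine hcoprime.dvd_of_dvd_mul_left ?_
    rw [← dvd_add_right (Dvd.intro_left (n : Polynomial F) rfl),
      ← restrictLine_frobeniusPolar hf, hg, restrictLine_mul]
    exact dvd_mul_right _ _
  have hcoeff : (restrictLine a b (directionalDeriv b f)).coeff (n - 1) ≠ 0 := by
    rw [coeff_restrictLine_of_isHomogeneous (isHomogeneous_directionalDeriv hf b),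
      eval_directionalDeriv_self hf]
    exact mul_ne_zero hn hb
  have hle : n ≤ (restrictLine a b f).natDegree :=
    Polynomial.le_natDegree_of_ne_zero (by rwa [coeff_restrictLine_of_isHomogeneous hf])
  have hlt : n ≤ n - 1 := calc
    n ≤ (restrictLine a b f).natDegree := hle
    _ ≤ (restrictLine a b (directionalDeriv b f)).natDegree :=
      Polynomial.natDegree_le_of_dvd hdvd fun h => hcoeff (by rw [h, Polynomial.coeff_zero])
    _ ≤ (directionalDeriv b f).totalDegree := natDegree_restrictLine_le ..
    _ ≤ n - 1 := (isHomogeneous_directionalDeriv hf b).totalDegree_le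
  have hn0 : n ≠ 0 := fun h => hn (by rw [h, Nat.cast_zero])
  lia

end FrobeniusPolar

section Homogeneous

variable {F σ : Type*} [Field F]

theorem finrank_homogeneousSubmodule [Fintype σ] (n : ℕ) :
    finrank F (homogeneousSubmodule σ F n) =
      (Fintype.card σ + n - 1).choose n := by
  classical
  have hdegree : {d : σ →₀ ℕ | d.degree = n} =
      (Finset.univ : Finset σ).finsuppAntidiag n := by
    ext d
    simp [Finset.mem_finsuppAntidiag, Finsupp.degree_eq_sum]
  rw [homogeneousSubmodule_eq_finsupp_supported]
  refine (AddMonoidAlgebra.supportedEquivFinsupp (R := F) (S := F)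
    {d : σ →₀ ℕ | d.degree = n}).finrank_eq.trans ?_
  rw [hdegree, finrank_finsupp_self, ← Finset.card_univ (α := σ),
    ← Finset.card_finsuppAntidiag_nat_eq_choose]
  simp

instance homogeneousSubmodule_finite [Finite σ] (n : ℕ) :
    Module.Finite F (homogeneousSubmodule σ F n) :=
  Module.Finite.of_fg (homogeneousSubmodule_fg _ _ n)

theorem homogeneousComponent_mul_of_isHomogeneous {f : MvPolynomial σ F} {d : ℕ}
    (hf : f.IsHomogeneous d) (g : MvPolynomial σ F) (m : ℕ) :
    homogeneousComponent (m + d) (f * g) = f * homogeneousComponent m g := by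
  have hcomponent (i : ℕ) : homogeneousComponent (m + d) (f * homogeneousComponent i g) =
      if i = m then f * homogeneousComponent m g else 0 := by
    have hmem : f * homogeneousComponent i g ∈ homogeneousSubmodule σ F (i + d) := by
      rw [mem_homogeneousSubmodule, add_comm]
      exact hf.mul (homogeneousComponent_isHomogeneous i g)
    rw [homogeneousComponent_of_mem hmem]
    by_cases him : i = m
    · subst him; simp
    · simp [him, Ne.symm him]
  conv_lhs => rw [← sum_homogeneousComponent g, Finset.mul_sum, map_sum]
  simp only [hcomponent, Finset.sum_ite_eq', Finset.mem_range, Nat.lt_succ_iff]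
  split_ifs with hm
  · rfl
  · rw [homogeneousComponent_eq_zero m g (not_le.mp hm), mul_zero]

/-- The syzygies of `f, g` are spanned by `(-g, f)`, so that the Koszul complex of `f, g`
computes the dimension of the degree `m + d + e` part of the ideal `(f, g)`. -/
theorem finrank_add_finrank_le_of_prime [Finite σ] {f g : MvPolynomial σ F} {m d e : ℕ}
    (hf : f.IsHomogeneous d) (hg : g.IsHomogeneous e) (hp : Prime f) (hfg : ¬ f ∣ g)
    {K : Submodule F (MvPolynomial σ F)} [Module.Finite F K]
    (hKf : ∀ a : MvPolynomial σ F, a.IsHomogeneous (m + e) → a * f ∈ K)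
    (hKg : ∀ a : MvPolynomial σ F, a.IsHomogeneous (m + d) → a * g ∈ K) :
    finrank F (homogeneousSubmodule σ F (m + e)) + finrank F (homogeneousSubmodule σ F (m + d)) ≤
      finrank F K + finrank F (homogeneousSubmodule σ F m) := by
  let V := homogeneousSubmodule σ F
  let Φ : V (m + e) × V (m + d) →ₗ[F] MvPolynomial σ F :=
    (LinearMap.mulRight F f ∘ₗ (V (m + e)).subtype).coprod
      (LinearMap.mulRight F g ∘ₗ (V (m + d)).subtype)
  let Ψ : V m →ₗ[F] V (m + e) × V (m + d) :=
    ((LinearMap.mulRight F (-g) ∘ₗ (V m).subtype).codRestrict (V (m + e))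
      fun a => IsHomogeneous.mul a.2 hg.neg).prod
    ((LinearMap.mulRight F f ∘ₗ (V m).subtype).codRestrict (V (m + d))
      fun a => IsHomogeneous.mul a.2 hf)
  have hrange : LinearMap.range Φ ≤ K := by
    rintro _ ⟨⟨a, b⟩, rfl⟩
    exact add_mem (hKf a a.2) (hKg b b.2)
  have hker : LinearMap.ker Φ ≤ LinearMap.range Ψ := by
    rintro ⟨⟨a, ha⟩, ⟨b, hb⟩⟩ hab
    have hsyzygy : a * f + b * g = 0 := hab
    have hdvd : f ∣ b * g := ⟨-a, by linear_combination hsyzygy⟩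
    obtain ⟨c, rfl⟩ := (hp.dvd_or_dvd hdvd).resolve_right hfg
    have hc : f * homogeneousComponent m c = f * c := by
      rw [← homogeneousComponent_mul_of_isHomogeneous hf, homogeneousComponent_eq_self hb]
    refine ⟨⟨homogeneousComponent m c, homogeneousComponent_mem m c⟩,
      Prod.ext (Subtype.ext ?_) (Subtype.ext ?_)⟩
    · refine mul_right_cancel₀ hp.ne_zero ?_
      change homogeneousComponent m c * -g * f = a * f
      linear_combination -g * hc - hsyzygy
    · change homogeneousComponent m c * f = f * c
      rw [mul_comm, hc]
  have hΦ := Φ.finrank_range_add_finrank_ker.trans finrank_prod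
  have hΨ := Ψ.finrank_range_add_finrank_ker
  have := Submodule.finrank_mono hrange
  have := Submodule.finrank_mono hker
  simp only [V] at *
  omega

end Homogeneous

section DoublePoints

variable {F σ : Type*} [Field F]

theorem exists_dual_of_linearIndependent {ι V : Type*} [AddCommGroup V] [Module F V] {v : ι → V}
    (hv : LinearIndependent F v) (u : ι → F) : ∃ φ : Dual F V, ∀ i, φ (v i) = u i := by
  obtain ⟨φ, hφ⟩ := LinearMap.exists_extend (Finsupp.linearCombination F u ∘ₗ hv.repr)
  refine ⟨φ, fun i => ?_⟩
  have hi : v i ∈ Submodule.span F (Set.range v) := Submodule.subset_span ⟨i, rfl⟩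
  have := LinearMap.congr_fun hφ ⟨v i, hi⟩
  simpa [hv.repr_eq_single i ⟨v i, hi⟩ rfl] using this

theorem exists_isHomogeneous_one_eval_eq [Finite σ] (φ : Dual F (σ → F)) :
    ∃ l : MvPolynomial σ F, l.IsHomogeneous 1 ∧ ∀ x, eval x l = φ x := by
  classical
  have := Fintype.ofFinite σ
  refine ⟨∑ i, C (φ (Pi.single i 1)) * X i,
    IsHomogeneous.sum _ _ _ fun i _ => isHomogeneous_C_mul_X _ _, fun x => ?_⟩
  rw [LinearMap.pi_apply_eq_sum_univ φ x]
  simp only [map_sum, map_mul, eval_C, eval_X, smul_eq_mul]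
  refine Finset.sum_congr rfl fun i _ => ?_
  rw [mul_comm, show (Pi.single i 1 : σ → F) = fun j => if i = j then 1 else 0 from
    funext fun j => by simp [Pi.single_apply, eq_comm]]

theorem eval_directionalDeriv_of_isHomogeneous_one {l : MvPolynomial σ F}
    (hl : l.IsHomogeneous 1) (x v : σ → F) : eval x (directionalDeriv v l) = eval v l := by
  rw [← coeff_one_restrictLine, coeff_restrictLine_of_isHomogeneous hl]

/-- The values of a polynomial and of its derivative in the direction `τ y` at all points `y` of
a finite set `Z`. -/
noncomputable def doublePointEval (Z : Finset (σ → F)) (τ : (σ → F) → σ → F) :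
    MvPolynomial σ F →ₗ[F] (Z → F × F) :=
  LinearMap.pi fun y => (aeval y.1).toLinearMap.prod
    ((aeval y.1).toLinearMap ∘ₗ (directionalDeriv (τ y.1)).toLinearMap)

theorem doublePointEval_apply (Z : Finset (σ → F)) (τ : (σ → F) → σ → F) (p : MvPolynomial σ F)
    (y : Z) : doublePointEval Z τ p y =
      (eval y.1 p, eval y.1 (directionalDeriv (τ y.1) p)) := rfl

theorem exists_isHomogeneous_doublePointEval_eq [Finite σ] {Z : Finset (σ → F)}
    {τ : (σ → F) → σ → F} {k : ℕ} (hτ : ∀ y ∈ Z, LinearIndependent F ![y, τ y])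
    (hsep : ∀ y ∈ Z, ∃ E : MvPolynomial σ F, E.IsHomogeneous k ∧ eval y E = 1 ∧
      ∀ z ∈ Z, z ≠ y → eval z E = 0) (u : Z → F × F) :
    ∃ p : MvPolynomial σ F, p.IsHomogeneous (2 * k + 1) ∧ doublePointEval Z τ p = u := by
  choose E hE hEself hEother using fun y : Z => hsep y y.2
  choose φ hφ using fun y : Z => exists_dual_of_linearIndependent (hτ y y.2)
    ![(u y).1, (u y).2 - 2 * eval y.1 (directionalDeriv (τ y) (E y)) * (u y).1]
  choose l hl hleval using fun y => exists_isHomogeneous_one_eval_eq (φ y)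
  refine ⟨∑ y, E y ^ 2 * l y, IsHomogeneous.sum _ _ _ fun y _ => ?_, funext fun z => ?_⟩
  · simpa [mul_comm] using ((hE y).pow 2).mul (hl y)
  have hφy : eval z.1 (l z) = (u z).1 := (hleval z _).trans (hφ z 0)
  have hφτ : eval (τ z) (l z) = _ := (hleval z _).trans (hφ z 1)
  rw [map_sum, Finset.sum_apply, Finset.sum_eq_single z]
  · ext
    · simp [doublePointEval_apply, hEself, hφy]
    · simp [doublePointEval_apply, Derivation.leibniz, Derivation.leibniz_pow, hEself, hφy, hφτ,
        eval_directionalDeriv_of_isHomogeneous_one (hl z)]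
      ring
  · intro y _ hyz
    have hzero := hEother y z z.2 fun h => hyz (Subtype.ext h.symm)
    simp [doublePointEval_apply, Derivation.leibniz, Derivation.leibniz_pow, hzero]
  · simp

theorem add_two_choose_two_add_add_two_choose_two (m d e : ℕ) :
    (m + d + e + 2).choose 2 + (m + 2).choose 2 =
      (m + e + 2).choose 2 + (m + d + 2).choose 2 + d * e := by
  have htwo (n : ℕ) : 2 * (n + 2).choose 2 = (n + 2) * (n + 1) := by
    rw [Nat.choose_two_right, Nat.mul_div_cancel' (Nat.even_mul_pred_self (n + 2)).two_dvd]
    rfl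
  nlinarith [htwo (m + d + e), htwo m, htwo (m + e), htwo (m + d)]

/-- A form of Bézout's inequality: the points of `Z` count twice, because `g` is singular there. -/
theorem two_mul_card_le_of_singular_zeros {f g : MvPolynomial (Fin 3) F} {d e k : ℕ}
    {Z : Finset (Fin 3 → F)} {τ : (Fin 3 → F) → Fin 3 → F}
    (hf : f.IsHomogeneous d) (hg : g.IsHomogeneous e) (hp : Prime f) (hfg : ¬ f ∣ g)
    (hτ : ∀ y ∈ Z, LinearIndependent F ![y, τ y])
    (hZf : doublePointEval Z τ f = 0) (hZg : doublePointEval Z τ g = 0) (hk : d + e ≤ 2 * k + 1)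
    (hsep : ∀ y ∈ Z, ∃ E : MvPolynomial (Fin 3) F, E.IsHomogeneous k ∧ eval y E = 1 ∧
      ∀ z ∈ Z, z ≠ y → eval z E = 0) :
    2 * Z.card ≤ d * e := by
  obtain ⟨m, hm⟩ : ∃ m, 2 * k + 1 = m + d + e := ⟨2 * k + 1 - (d + e), by omega⟩
  let T := doublePointEval Z τ ∘ₗ (homogeneousSubmodule (Fin 3) F (m + d + e)).subtype
  have hmul {a h : MvPolynomial (Fin 3) F} (hh : doublePointEval Z τ h = 0) :
      doublePointEval Z τ (a * h) = 0 := by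
    ext y : 1
    have hy := congrFun hh y
    simp only [doublePointEval_apply, Pi.zero_apply, Prod.mk_eq_zero] at hy ⊢
    simp [Derivation.leibniz, hy]
  have hT : LinearMap.range T = ⊤ := by
    refine LinearMap.range_eq_top.mpr fun u => ?_
    obtain ⟨p, hp, rfl⟩ := exists_isHomogeneous_doublePointEval_eq hτ hsep u
    exact ⟨⟨p, hm ▸ hp⟩, rfl⟩
  have hkoszul := finrank_add_finrank_le_of_prime hf hg hp hfg
    (K := (LinearMap.ker T).map (homogeneousSubmodule (Fin 3) F (m + d + e)).subtype)
    (fun a ha => ⟨⟨a * f, by simpa [add_right_comm] using ha.mul hf⟩, hmul hZf, rfl⟩)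
    (fun a ha => ⟨⟨a * g, ha.mul hg⟩, hmul hZg, rfl⟩)
  have hrank := T.finrank_range_add_finrank_ker
  rw [hT, finrank_top] at hrank
  have htarget : finrank F (Z → F × F) = 2 * Z.card := by
    simp [finrank_pi_fintype, mul_comm]
  have hplane (n : ℕ) : finrank F (homogeneousSubmodule (Fin 3) F n) = (n + 2).choose 2 := by
    rw [finrank_homogeneousSubmodule, Fintype.card_fin, ← Nat.choose_symm (by omega)]
    congr 1 <;> omega
  rw [Submodule.finrank_map_subtype_eq] at hkoszul
  simp only [hplane, htarget] at hkoszul hrank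
  have := add_two_choose_two_add_add_two_choose_two m d e
  omega

end DoublePoints

section AffineZeros

theorem exists_tangent_direction {F : Type*} [Field F] (f : MvPolynomial (Fin 3) F)
    (y : Fin 3 → F) :
    ∃ w : Fin 3 → F, w ≠ 0 ∧ w 0 = 0 ∧ eval y (directionalDeriv w f) = 0 := by
  have hker : LinearMap.ker ((LinearMap.proj 0 : (Fin 3 → F) →ₗ[F] F).prod (polarForm f y)) ≠ ⊥ :=
    LinearMap.ker_ne_bot_of_finrank_lt (by simp)
  obtain ⟨w, hw, hw0⟩ := Submodule.exists_mem_ne_zero_of_ne_bot hker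
  rw [LinearMap.mem_ker, LinearMap.prod_apply] at hw
  exact ⟨w, hw0, Prod.mk_eq_zero.mp hw⟩

variable {F : Type*} [Field F] [Fintype F]

theorem card_sub_one_mul_card_sub_one_le {V : Type*} [AddCommGroup V] [Module F V]
    [DecidableEq V] {Z D : Finset V} {e : ℕ}
    (hD : ∀ x ∈ Z, ∀ y ∈ Z, ∀ t : F, t • (y - x) ∈ D)
    (hline : ∀ x ∈ Z, ∀ w ∈ D, w ≠ 0 → (Finset.univ.filter fun t : F => x + t • w ∈ Z).card ≤ e) :
    (Fintype.card F - 1) * (Z.card - 1) ≤ (D.card - 1) * (e - 1) := by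
  classical
  rcases Z.eq_empty_or_nonempty with rfl | ⟨x, hx⟩
  · simp
  have h0 : (0 : V) ∈ D := by simpa using hD x hx x hx 0
  rw [← Finset.card_univ, ← Finset.card_erase_of_mem (Finset.mem_univ (0 : F)),
    ← Finset.card_erase_of_mem hx, ← Finset.card_erase_of_mem h0]
  refine Finset.card_mul_le_card_mul (fun (t : F) w => x + t • w ∈ Z) (fun t ht => ?_)
    fun w hw => ?_
  · have ht := Finset.ne_of_mem_erase ht
    refine Finset.card_le_card_of_injOn (fun y => t⁻¹ • (y - x)) (fun y hy => ?_)
      fun y _ z _ h => ?_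
    · obtain ⟨hyx, hy⟩ := Finset.mem_erase.mp hy
      simp [Finset.bipartiteAbove, hD x hx y hy, ht, sub_eq_zero, hyx, hy]
    · exact sub_left_injective (smul_right_injective V (inv_ne_zero ht) h)
  · obtain ⟨hw0, hw⟩ := Finset.mem_erase.mp hw
    refine le_trans (le_of_eq ?_) (Nat.sub_le_sub_right (hline x hx w hw hw0) 1)
    rw [← Finset.card_erase_of_mem (a := (0 : F)) (by simpa using hx)]
    congr 1
    ext t
    simp [Finset.bipartiteBelow]

theorem card_filter_apply_eq_zero [DecidableEq F] {n : ℕ} (i : Fin (n + 1)) :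
    (Finset.univ.filter fun x : Fin (n + 1) → F => x i = 0).card = Fintype.card F ^ n := by
  let π : (Fin (n + 1) → F) →ₗ[F] F := LinearMap.proj i
  have hπ : LinearMap.range π = ⊤ := LinearMap.range_eq_top.mpr (Function.surjective_eval i)
  have hrank := π.finrank_range_add_finrank_ker
  rw [hπ, finrank_top, finrank_self, finrank_fin_fun, add_comm] at hrank
  have hcard := Module.natCard_eq_pow_finrank (K := F) (V := LinearMap.ker π)
  rw [Nat.add_right_cancel hrank, Nat.card_eq_fintype_card (α := F)] at hcard
  rw [← hcard]
  exact (Nat.subtype_card _ fun x => by simp [π]).symm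

theorem exists_isHomogeneous_separating {n : ℕ} {y : Fin (n + 1) → F} (hy : y 0 = 1) :
    ∃ E : MvPolynomial (Fin (n + 1)) F, E.IsHomogeneous (n * (Fintype.card F - 1)) ∧
      eval y E = 1 ∧ ∀ z : Fin (n + 1) → F, z 0 = 1 → z ≠ y → eval z E = 0 := by
  have hcard : Fintype.card F - 1 ≠ 0 := (Nat.sub_pos_of_lt Fintype.one_lt_card).ne'
  refine ⟨∏ i : Fin n, (X 0 ^ (Fintype.card F - 1) -
    (X i.succ - C (y i.succ) * X 0) ^ (Fintype.card F - 1)), ?_, ?_, fun z hz hzy => ?_⟩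
  · have hfactor (i : Fin n) : (X 0 ^ (Fintype.card F - 1) - (X i.succ - C (y i.succ) * X 0) ^
        (Fintype.card F - 1) : MvPolynomial (Fin (n + 1)) F).IsHomogeneous
          (Fintype.card F - 1) := by
      refine (isHomogeneous_X_pow _ _).sub ?_
      simpa using ((isHomogeneous_X F i.succ).sub
        (isHomogeneous_C_mul_X (y i.succ) 0)).pow (Fintype.card F - 1)
    simpa using IsHomogeneous.prod Finset.univ _ _ fun i _ => hfactor i
  · simp [hy, zero_pow hcard]
  · obtain ⟨i, hi⟩ : ∃ i, z i ≠ y i := Function.ne_iff.mp hzy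
    obtain ⟨j, rfl⟩ := Fin.exists_succ_eq.mpr fun h : i = 0 => hi (by rw [h, hz, hy])
    rw [map_prod, Finset.prod_eq_zero (Finset.mem_univ j)]
    simp [hz, FiniteField.pow_card_sub_one_eq_one _ (sub_ne_zero.mpr hi)]

theorem natCast_eq_zero_of_card_eq_pow {q n : ℕ} (hF : Fintype.card F = q ^ n) : (q : F) = 0 :=
  eq_zero_of_pow_eq_zero (by rw [← Nat.cast_pow, ← hF, Nat.cast_card_eq_zero])

variable [DecidableEq F]

/-- The zeros of a ternary form in the affine plane `X_0 = 1`. -/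
noncomputable def affineZeros (f : MvPolynomial (Fin 3) F) : Finset (Fin 3 → F) :=
  Finset.univ.filter fun x => x 0 = 1 ∧ eval x f = 0

theorem mem_affineZeros {f : MvPolynomial (Fin 3) F} {x : Fin 3 → F} :
    x ∈ affineZeros f ↔ x 0 = 1 ∧ eval x f = 0 := by
  simp [affineZeros]

theorem card_affineZeros_le {f : MvPolynomial (Fin 3) F}
    (hline : ∀ x w : Fin 3 → F, w ≠ 0 → w 0 = 0 → restrictLine x w f ≠ 0) :
    (affineZeros f).card ≤ 1 + (Fintype.card F + 1) * (f.totalDegree - 1) := by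
  have hcount := card_sub_one_mul_card_sub_one_le (F := F) (Z := affineZeros f)
    (D := Finset.univ.filter fun w => w 0 = 0) (e := f.totalDegree)
    (fun x hx y hy t => by
      simp [(mem_affineZeros.mp hx).1, (mem_affineZeros.mp hy).1])
    (fun x _ w hw hw0 => ?_)
  · rw [card_filter_apply_eq_zero] at hcount
    obtain ⟨m, hm⟩ : ∃ m, Fintype.card F = m + 2 :=
      ⟨_, (Nat.sub_add_cancel Fintype.one_lt_card).symm⟩
    have hsq : (m + 2) ^ 2 - 1 = (m + 1) * (m + 2 + 1) := by
      rw [Nat.sub_eq_iff_eq_add (Nat.one_le_pow _ _ (by omega))]; ring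
    rw [hm, hsq, mul_assoc] at hcount
    have := Nat.le_of_mul_le_mul_left hcount (by omega)
    rw [hm]
    omega
  · have hwne := hline x w hw0 (Finset.mem_filter.mp hw).2
    refine le_trans ?_ (natDegree_restrictLine_le x w f)
    refine Polynomial.card_le_degree_of_subset_roots fun t ht => ?_
    rw [Polynomial.mem_roots hwne, Polynomial.IsRoot, eval_restrictLine]
    exact (mem_affineZeros.mp (Finset.mem_filter.mp ht).2).2

theorem irreducible_of_lt_card_affineZeros {f : MvPolynomial (Fin 3) F} {n : ℕ}
    (hf : f.IsHomogeneous n) (hn : n ≠ 0)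
    (hinf : ∀ w : Fin 3 → F, w ≠ 0 → w 0 = 0 → eval w f ≠ 0)
    (hcard : 2 + (Fintype.card F + 1) * (n - 2) < (affineZeros f).card) : Irreducible f := by
  have hline (x w : Fin 3 → F) (hw : w ≠ 0) (hw0 : w 0 = 0) : restrictLine x w f ≠ 0 := fun h =>
    hinf w hw hw0 (by rw [← coeff_restrictLine_of_isHomogeneous hf x, h, Polynomial.coeff_zero])
  have hf0 : f ≠ 0 := by
    rintro rfl
    exact hinf ![0, 1, 0] (fun h => one_ne_zero (congrFun h 1)) rfl (map_zero _)
  have hdeg := hf.totalDegree hf0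
  have hunit (g : MvPolynomial (Fin 3) F) (hg : g ≠ 0) (hg' : ¬ IsUnit g) : g.totalDegree ≠ 0 := by
    intro h
    rw [totalDegree_eq_zero_iff_eq_C] at h
    rw [h] at hg hg'
    exact hg' (IsUnit.map C (isUnit_iff_ne_zero.mpr fun h => hg (by rw [h, C_0])))
  refine ⟨fun h => hn (hdeg ▸ isUnit_iff_totalDegree_of_isReduced.mp h |>.2), fun g h hgh => ?_⟩
  by_contra! hcon
  subst hgh
  have hg0 := left_ne_zero_of_mul hf0
  have hh0 := right_ne_zero_of_mul hf0
  have hgdeg := hunit g hg0 hcon.1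
  have hhdeg := hunit h hh0 hcon.2
  have hg := card_affineZeros_le fun x w hw hw0 =>
    left_ne_zero_of_mul (restrictLine_mul x w g h ▸ hline x w hw hw0)
  have hh := card_affineZeros_le fun x w hw hw0 =>
    right_ne_zero_of_mul (restrictLine_mul x w g h ▸ hline x w hw hw0)
  have hsub : affineZeros (g * h) ⊆ affineZeros g ∪ affineZeros h := fun x => by
    simp only [Finset.mem_union, mem_affineZeros, map_mul, mul_eq_zero]
    tauto
  have hunion := (Finset.card_le_card hsub).trans (Finset.card_union_le _ _)
  rw [totalDegree_mul_of_isDomain hg0 hh0] at hdeg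
  have hsum : (g.totalDegree - 1) + (h.totalDegree - 1) = n - 2 := by omega
  rw [← hsum, mul_add] at hcard
  omega

/-- Over the field with `q²` elements, `frobeniusPolar f` is singular at every rational zero of a
form `f` of degree `q + 1`, so Bézout counts these zeros twice. -/
theorem linearIndependent_pair_of_apply_eq_one_of_apply_eq_zero {K ι : Type*} [Field K]
    {v w : ι → K} {i : ι} (hv : v i = 1) (hw : w ≠ 0) (hwi : w i = 0) :
    LinearIndependent K ![v, w] := by
  refine (LinearIndependent.pair_iff' fun h => ?_).mpr fun c h => hw ?_
  · simp [h] at hv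
  · have hc := congrFun h i
    rw [Pi.smul_apply, hv, hwi, smul_eq_mul, mul_one] at hc
    rw [← h, hc, zero_smul]

theorem card_affineZeros_lt {q : ℕ} (hq : 2 < q) (hF : Fintype.card F = q ^ 2)
    {f : MvPolynomial (Fin 3) F} (hf : f.IsHomogeneous (q + 1))
    (hinf : ∀ w : Fin 3 → F, w ≠ 0 → w 0 = 0 → eval w f ≠ 0) :
    (affineZeros f).card < q ^ 3 := by
  by_contra! hcard
  have hq0 : (q : F) = 0 := natCast_eq_zero_of_card_eq_pow hF
  have hprime : Prime f := by
    refine (irreducible_of_lt_card_affineZeros hf (by omega) hinf (hcard.trans_lt' ?_)).prime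
    obtain ⟨r, rfl⟩ := Nat.exists_eq_add_of_lt hq
    rw [hF, show 2 + r + 1 + 1 - 2 = r + 2 by omega]
    nlinarith
  have hndvd : ¬ f ∣ frobeniusPolar f := by
    refine not_dvd_frobeniusPolar hf (by simp [hq0]) (a := ![0, 1, 0]) (b := ![0, 0, 1])
      (fun t => hinf _ (fun h => one_ne_zero (α := F) ?_) (by simp))
      (hinf _ (fun h => one_ne_zero (α := F) (congrFun h 2)) rfl)
    simpa using congrFun h 1
  choose τ hτ hτ0 hτf using exists_tangent_direction f
  have hbezout := two_mul_card_le_of_singular_zeros (k := 2 * (q ^ 2 - 1)) (Z := affineZeros f)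
    (τ := τ) hf (isHomogeneous_frobeniusPolar hf) hprime hndvd (fun y hy => ?_)
    (funext fun y => Prod.ext (mem_affineZeros.mp y.2).2 (hτf y)) (funext fun y => ?_) ?_
    fun y hy => ?_
  · rw [hF, Nat.add_sub_cancel] at hbezout
    nlinarith
  · exact linearIndependent_pair_of_apply_eq_one_of_apply_eq_zero (mem_affineZeros.mp hy).1 (hτ y)
      (hτ0 y)
  · rw [doublePointEval_apply, eval_frobeniusPolar hf, (mem_affineZeros.mp y.2).2, mul_zero,
      eval_directionalDeriv_frobeniusPolar hf (by simpa using hq0)]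
    rfl
  · rw [hF]
    have : 9 ≤ q ^ 2 := by nlinarith
    have : q * 3 ≤ q ^ 2 := by nlinarith
    omega
  · obtain ⟨E, hE, hEy, hEz⟩ := exists_isHomogeneous_separating (mem_affineZeros.mp hy).1
    exact ⟨E, hF ▸ hE, hEy, fun z hz => hEz z (mem_affineZeros.mp hz).1⟩

end AffineZeros

section Averaging

variable {G ι : Type*} [AddGroup G] [Fintype ι] {m : ι → G}

theorem sum_card_filter_add_mem [DecidableEq G] {S : Finset G}
    (hS : ∀ a i, a + m i ∈ S ↔ a ∈ S) (Z : Finset G) :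
    ∑ a ∈ S, (Finset.univ.filter fun i => a + m i ∈ Z).card = Fintype.card ι * (S ∩ Z).card := by
  have htranslate (i : ι) : (S.filter fun a => a + m i ∈ Z).card = (S ∩ Z).card := by
    refine Finset.card_bij (fun a _ => a + m i) (fun a ha => ?_) (fun a _ b _ h => ?_)
      fun b hb => ?_
    · simpa [hS] using ha
    · exact add_right_cancel h
    · refine ⟨b + -m i, ?_, by simp⟩
      have hb' := (Finset.mem_inter.mp hb)
      simpa [← hS (b + -m i) i] using hb'
  simp_rw [Finset.card_filter]
  rw [Finset.sum_comm]
  simp_rw [← Finset.card_filter, htranslate]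
  simp

theorem exists_card_le_mul_ncard [Finite G] {S Z : Set G} {q : ℕ} (hne : S.Nonempty)
    (hS : ∀ a i, a + m i ∈ S ↔ a ∈ S) (hZ : S.ncard ≤ q * (S ∩ Z).ncard) :
    ∃ a ∈ S, Fintype.card ι ≤ q * {i | a + m i ∈ Z}.ncard := by
  classical
  lift S to Finset G using S.toFinite
  lift Z to Finset G using Z.toFinite
  simp only [← Finset.coe_inter, Set.ncard_coe_finset] at hZ
  obtain ⟨a, ha, hle⟩ : ∃ a ∈ S,
      Fintype.card ι ≤ q * (Finset.univ.filter fun i => a + m i ∈ Z).card := by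
    refine Finset.exists_le_of_sum_le hne ?_
    rw [← Finset.mul_sum, sum_card_filter_add_mem hS, Finset.sum_const, smul_eq_mul]
    nlinarith
  refine ⟨a, ha, ?_⟩
  simpa [Set.ncard_eq_toFinset_card'] using hle

theorem ncard_eq_of_forall_ncard_le [Finite G] {S Z : Set G} {N : ℕ}
    (hS : ∀ a i, a + m i ∈ S ↔ a ∈ S) (hZ : N * S.ncard ≤ Fintype.card ι * (S ∩ Z).ncard)
    (hN : ∀ a ∈ S, {i | a + m i ∈ Z}.ncard ≤ N) {a : G} (ha : a ∈ S) :
    {i | a + m i ∈ Z}.ncard = N := by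
  classical
  lift S to Finset G using S.toFinite
  lift Z to Finset G using Z.toFinite
  have hfilter (b : G) : {i | b + m i ∈ (Z : Set G)}.ncard =
      (Finset.univ.filter fun i => b + m i ∈ Z).card := by
    simp [Set.ncard_eq_toFinset_card']
  simp only [← Finset.coe_inter, Set.ncard_coe_finset, Finset.mem_coe] at *
  refine (Finset.sum_eq_sum_iff_of_le hN).mp (le_antisymm (Finset.sum_le_sum hN) ?_) a ha
  simp only [hfilter]
  rwa [sum_card_filter_add_mem hS, Finset.sum_const, smul_eq_mul, mul_comm]

theorem ncard_mul_eq_of_forall_ncard_eq [Finite G] {S Z : Set G} {N : ℕ}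
    (hS : ∀ a i, a + m i ∈ S ↔ a ∈ S) (hN : ∀ a ∈ S, {i | a + m i ∈ Z}.ncard = N) :
    S.ncard * N = Fintype.card ι * (S ∩ Z).ncard := by
  classical
  lift S to Finset G using S.toFinite
  lift Z to Finset G using Z.toFinite
  simp only [Set.ncard_eq_toFinset_card', Set.toFinset_ofPred, Finset.mem_coe] at hN
  simp only [← Finset.coe_inter, Set.ncard_coe_finset, Finset.mem_coe] at *
  rw [← sum_card_filter_add_mem hS, Finset.sum_congr rfl hN, Finset.sum_const, smul_eq_mul]

end Averaging

section LeadingCoefficient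

variable {R σ : Type*} [CommRing R]

theorem coeff_restrictLine_eq_eval_homogeneousComponent {p : MvPolynomial σ R} {n : ℕ}
    (hp : p.totalDegree ≤ n) (a b : σ → R) :
    (restrictLine a b p).coeff n = eval b (homogeneousComponent n p) := by
  have hsum : ∑ i ∈ Finset.range (n + 1), homogeneousComponent i p = p := by
    conv_rhs => rw [← sum_homogeneousComponent p]
    refine (Finset.sum_subset (Finset.range_mono (by omega)) fun i _ hi => ?_).symm
    exact homogeneousComponent_eq_zero _ _ (by simpa using hi)
  conv_lhs => rw [← hsum, restrictLine, map_sum, Finset.sum_range_succ, Polynomial.coeff_add,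
    Polynomial.finsetSum_coeff]
  rw [Finset.sum_eq_zero, zero_add]
  · exact coeff_restrictLine_of_isHomogeneous (homogeneousComponent_isHomogeneous n p) a b
  · intro i hi
    refine Polynomial.coeff_eq_zero_of_natDegree_lt ?_
    exact (natDegree_restrictLine_le a b _).trans_lt
      ((homogeneousComponent_isHomogeneous i p).totalDegree_le.trans_lt (Finset.mem_range.mp hi))

theorem natDegree_restrictLine_single_le [DecidableEq σ] (a : σ → R) (i : σ)
    (p : MvPolynomial σ R) : (restrictLine a (Pi.single i 1) p).natDegree ≤ p.degreeOf i := by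
  rw [restrictLine, aeval_def, eval₂_eq, Polynomial.algebraMap_eq]
  refine Polynomial.natDegree_sum_le_of_forall_le _ _ fun d hd => ?_
  refine (Polynomial.natDegree_C_mul_le _ _).trans ((Polynomial.natDegree_prod_le _ _).trans ?_)
  have hfactor (j : σ) : ((Polynomial.C (a j) + Polynomial.C (Pi.single (M := fun _ => R) i 1 j) *
      Polynomial.X) ^ d j).natDegree ≤ if j = i then d i else 0 := by
    split_ifs with h
    · subst h
      compute_degree
    · rw [Pi.single_eq_of_ne h, map_zero, zero_mul, add_zero, ← map_pow, Polynomial.natDegree_C]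
  refine (Finset.sum_le_sum fun j _ => hfactor j).trans ?_
  rw [Finset.sum_ite_eq']
  split_ifs
  · exact monomial_le_degreeOf i hd
  · exact Nat.zero_le _

theorem coeff_restrictLine_zero_single [DecidableEq σ] (i : σ) (n : ℕ) (p : MvPolynomial σ R) :
    (restrictLine 0 (Pi.single i 1) p).coeff n = p.coeff (Finsupp.single i n) := by
  have hmonomial (d : σ →₀ ℕ) : restrictLine 0 (Pi.single i 1) (monomial d (1 : R)) =
      if d = Finsupp.single i (d i) then Polynomial.X ^ d i else 0 := by
    rw [restrictLine, aeval_monomial, map_one, one_mul]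
    split_ifs with h
    · rw [h]
      simp
    · obtain ⟨j, hj⟩ := DFunLike.ne_iff.mp h
      have hji : j ≠ i := by
        rintro rfl
        simp at hj
      rw [Finsupp.single_eq_of_ne hji] at hj
      exact Finset.prod_eq_zero (Finsupp.mem_support_iff.mpr hj) (by simp [hji, hj])
  induction p using MvPolynomial.induction_on' with
  | monomial d r =>
    rw [← mul_one r, ← C_mul_monomial, restrictLine_mul, hmonomial, coeff_C_mul, coeff_monomial,
      restrictLine, ← algebraMap_eq, AlgHom.commutes, Polynomial.algebraMap_eq,
      Polynomial.coeff_C_mul]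
    congr 1
    split_ifs with h h' h'
    · rw [h']; simp
    · rw [Polynomial.coeff_X_pow, if_neg]
      rintro rfl
      exact h' h
    · exact absurd (by rw [h']; simp) h
    · simp
  | add p r hp hr => rw [restrictLine_add, Polynomial.coeff_add, hp, hr, coeff_add]

end LeadingCoefficient

section AffineRestriction

variable {R σ ι : Type*} [CommRing R] [Fintype ι] [DecidableEq ι]

/-- The restriction `f (a + M X)` of a polynomial `f` to the affine subspace parametrised by
`x ↦ a + M x`, as a polynomial in the parameters. -/
noncomputable def restrictAffine (a : σ → R) (M : (ι → R) →ₗ[R] σ → R) (f : MvPolynomial σ R) :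
    MvPolynomial ι R :=
  aeval (fun i => C (a i) + M.toMatrix'.toMvPolynomial i) f

variable (a : σ → R) (M : (ι → R) →ₗ[R] σ → R) (f : MvPolynomial σ R)

theorem eval_restrictAffine (x : ι → R) : eval x (restrictAffine a M f) = eval (a + M x) f := by
  have hcomp : (eval x).comp (aeval (fun i => C (a i) + M.toMatrix'.toMvPolynomial i) :
      MvPolynomial σ R →ₐ[R] MvPolynomial ι R).toRingHom = eval (a + M x) := by
    ext i
    · simp
    · simp [Matrix.toMvPolynomial_eval_eq_apply, LinearMap.toMatrix'_mulVec]
  exact congrArg (fun φ : MvPolynomial σ R →+* R => φ f) hcomp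

theorem totalDegree_restrictAffine_le : (restrictAffine a M f).totalDegree ≤ f.totalDegree := by
  rw [restrictAffine, aeval_def, eval₂_eq, algebraMap_eq]
  refine totalDegree_finsetSum_le fun d hd => ?_
  refine (totalDegree_mul _ _).trans ?_
  rw [totalDegree_C, zero_add]
  refine (totalDegree_finsetProd _ _).trans (le_trans (Finset.sum_le_sum fun i _ => ?_)
    (le_totalDegree hd))
  refine (totalDegree_pow _ _).trans ((Nat.mul_le_mul_left _ ?_).trans (mul_one _).le)
  refine (totalDegree_add _ _).trans (max_le ?_ (Matrix.toMvPolynomial_totalDegree_le _ _))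
  rw [totalDegree_C]
  exact zero_le_one

theorem isHomogeneous_restrictAffine_zero {f : MvPolynomial σ R} {n : ℕ} (hf : f.IsHomogeneous n) :
    (restrictAffine 0 M f).IsHomogeneous n := by
  rw [← one_mul n]
  refine hf.aeval _ fun i => ?_
  rw [Pi.zero_apply, C_0, zero_add]
  exact Matrix.toMvPolynomial_isHomogeneous _ _

theorem restrictLine_restrictAffine (x w : ι → R) :
    restrictLine x w (restrictAffine a M f) = restrictLine (a + M x) (M w) f := by
  have hlinear (i : σ) : restrictLine x w (M.toMatrix'.toMvPolynomial i) =
      Polynomial.C (M x i) + Polynomial.C (M w i) * Polynomial.X := by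
    rw [← LinearMap.toMatrix'_mulVec M x, ← LinearMap.toMatrix'_mulVec M w, Matrix.mulVec,
      Matrix.mulVec, dotProduct, dotProduct, Matrix.toMvPolynomial, restrictLine, map_sum, map_sum,
      map_sum, Finset.sum_mul, ← Finset.sum_add_distrib]
    simp [aeval_monomial, mul_add, mul_assoc]
  rw [restrictLine, restrictAffine, restrictLine, ← AlgHom.comp_apply]
  congr 1
  ext i : 1
  have hconst : restrictLine x w (C (a i)) = Polynomial.C (a i) := aeval_C _ _
  rw [AlgHom.comp_apply, aeval_X, ← restrictLine.eq_1, restrictLine_add, hconst, hlinear, aeval_X,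
    Pi.add_apply, map_add, add_assoc]

end AffineRestriction

section SchwartzZippel

theorem exists_linearEquiv_apply_eq {K V : Type*} [Field K] [AddCommGroup V] [Module K V]
    {v w : V} (hv : v ≠ 0) (hw : w ≠ 0) : ∃ A : V ≃ₗ[K] V, A v = w := by
  obtain ⟨A, hA⟩ := Submodule.exists_linearEquiv_restrict_eq
    ((LinearEquiv.coord K V v hv).trans (LinearEquiv.toSpanNonzeroSingleton K V w hw))
  refine ⟨A, ?_⟩
  have hAv := hA ⟨v, Submodule.mem_span_singleton_self v⟩
  rw [LinearEquiv.trans_apply, LinearEquiv.coord_self] at hAv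
  simpa using hAv.symm

theorem degLex_degree_eq_single {R : Type*} [CommRing R] {k q : ℕ}
    {p : MvPolynomial (Fin (k + 1)) R} (hp : p.totalDegree ≤ q)
    (hlead : p.coeff (Finsupp.single 0 q) ≠ 0) :
    MonomialOrder.degLex.degree p = Finsupp.single 0 q := by
  set d := MonomialOrder.degLex.degree p
  have hdeg : d.degree ≤ q := by rwa [degree_degLexDegree]
  have hle : MonomialOrder.degLex.toSyn (Finsupp.single 0 q) ≤ MonomialOrder.degLex.toSyn d :=
    MonomialOrder.le_degree (mem_support_iff.mpr hlead)
  rw [MonomialOrder.degLex_le_iff, Finsupp.DegLex.le_iff] at hle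
  simp only [ofDegLex_toDegLex, Finsupp.degree_single] at hle
  obtain hlt | ⟨heq, hlex⟩ := hle
  · omega
  have hzero : q ≤ d 0 := by
    by_contra! hlt
    refine absurd hlex (not_le.mpr ⟨0, fun j hj => absurd hj (Fin.not_lt_zero j), ?_⟩)
    simpa using hlt
  rw [Finsupp.degree_eq_sum, Fin.sum_univ_succ] at heq
  have hsucc : ∑ i : Fin k, d i.succ = 0 := by omega
  ext i
  cases i using Fin.cases with
  | zero => simp; omega
  | succ i =>
    rw [Finset.sum_eq_zero_iff.mp hsucc i (Finset.mem_univ i)]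
    simp

variable {F : Type*} [Field F] [Fintype F] {k q : ℕ}

-- Averaging over the parallel class of `v`: no line of the class can contain more than `q` zeros.
theorem card_line_zeros_eq [DecidableEq F] {σ : Type*} [Fintype σ] [DecidableEq σ]
    {p : MvPolynomial σ F} {v : σ → F} (hv : ∀ y, (restrictLine y v p).coeff q ≠ 0)
    (hp : p.totalDegree ≤ q)
    (hcard : q * Fintype.card (σ → F) ≤
      Fintype.card F * (Finset.univ.filter fun x => eval x p = 0).card) (y : σ → F) :
    (Finset.univ.filter fun t : F => eval (y + t • v) p = 0).card = q := by
  have hline (y : σ → F) : (Finset.univ.filter fun t : F => eval (y + t • v) p = 0).card ≤ q := by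
    have hne : restrictLine y v p ≠ 0 := fun h => hv y (by rw [h, Polynomial.coeff_zero])
    refine le_trans ?_ ((Polynomial.card_roots' _).trans
      ((natDegree_restrictLine_le y v p).trans hp))
    refine (Finset.card_le_card fun t ht => ?_).trans (Multiset.toFinset_card_le _)
    rw [Multiset.mem_toFinset, Polynomial.mem_roots hne, Polynomial.IsRoot, eval_restrictLine]
    simpa using ht
  have heq := ncard_eq_of_forall_ncard_le (m := fun t : F => t • v) (S := Set.univ)
    (Z := {x | eval x p = 0}) (N := q) (fun _ _ => by simp)
    (by simpa [Set.ncard_eq_toFinset_card'] using hcard)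
    (fun y _ => by simpa [Set.ncard_eq_toFinset_card'] using hline y) (Set.mem_univ y)
  simpa [Set.ncard_eq_toFinset_card'] using heq

theorem sum_C_mul_X_pow_card {σ : Type*} [Fintype σ] (b : σ → F) :
    (∑ i, C (b i) * X i : MvPolynomial σ F) ^ Fintype.card F =
      ∑ i, C (b i) * X i ^ Fintype.card F := by
  obtain ⟨p, hp⟩ := CharP.exists F
  obtain ⟨n, hprime, hn⟩ := FiniteField.card F p
  have : Fact p.Prime := ⟨hprime⟩
  conv_lhs => rw [hn, sum_pow_char_pow, ← hn]
  simp_rw [mul_pow, ← map_pow, FiniteField.pow_card]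

theorem totalDegree_X_pow_card_sub_X {σ : Type*} (i : σ) :
    (X i ^ Fintype.card F - X i : MvPolynomial σ F).totalDegree = Fintype.card F := by
  rw [sub_eq_add_neg, totalDegree_add_eq_left_of_totalDegree_lt, totalDegree_X_pow]
  rw [totalDegree_neg, totalDegree_X_pow, totalDegree_X]
  exact Fintype.one_lt_card

theorem exists_eq_sum_X_pow_card_sub_X {σ : Type*} [Fintype σ] {r : MvPolynomial σ F}
    (hdeg : r.totalDegree ≤ Fintype.card F) (hr : ∀ x, eval x r = 0) :
    ∃ c : σ → F, r = ∑ i, C (c i) * (X i ^ Fintype.card F - X i) := by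
  obtain ⟨h, hh, hsum⟩ := combinatorial_nullstellensatz_exists_linearCombination
    (fun _ : σ => (Finset.univ : Finset F)) (fun _ => Finset.univ_nonempty) r fun x _ => hr x
  have hprod (i : σ) : ∏ a : F, (X i - C a : MvPolynomial σ F) = X i ^ Fintype.card F - X i := by
    have := congrArg (Polynomial.aeval (X i : MvPolynomial σ F))
      (prod_X_sub_C_eq_X_pow_card_sub_X (F := F))
    simpa [map_prod, algebraMap_eq] using this
  have hne (i : σ) : (X i ^ Fintype.card F - X i : MvPolynomial σ F) ≠ 0 := by
    refine fun h => Fintype.card_ne_zero (α := F) ?_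
    rw [← totalDegree_X_pow_card_sub_X i, h, totalDegree_zero]
  have hconst (i : σ) : ∃ c : F, h i = C c := by
    rcases eq_or_ne (h i) 0 with h0 | h0
    · exact ⟨0, by rw [h0, C_0]⟩
    refine ⟨_, totalDegree_eq_zero_iff_eq_C.mp ?_⟩
    have hle := (hh i).trans hdeg
    rw [hprod, totalDegree_mul_of_isDomain (hne i) h0, totalDegree_X_pow_card_sub_X] at hle
    omega
  choose c hc using hconst
  refine ⟨c, ?_⟩
  rw [hsum, Finsupp.linearCombination_apply, Finsupp.sum_fintype _ _ (by simp)]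
  simp only [hprod, hc, smul_eq_mul]

theorem eval_add_eq_of_dvd {R σ : Type*} [CommRing R] [IsDomain R] {p g : MvPolynomial σ R}
    (hpg : p ∣ g) (hg : g ≠ 0) {w : σ → R}
    (hw : restrictLine X (fun i => C (w i)) (map C g) = Polynomial.C g) (x : σ → R) :
    eval (x + w) p = eval x p := by
  have hdvd : restrictLine X (fun i => C (w i)) (map C p) ∣ Polynomial.C g := by
    obtain ⟨h, rfl⟩ := hpg
    rw [← hw, map_mul, restrictLine_mul]
    exact dvd_mul_right _ _
  have hconst := Polynomial.eq_C_of_natDegree_eq_zero (Nat.le_zero.mp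
    ((Polynomial.natDegree_le_of_dvd hdvd (Polynomial.C_ne_zero.mpr hg)).trans
      (Polynomial.natDegree_C g).le))
  have heval (t : R) : eval x ((restrictLine X (fun i => C (w i)) (map C p)).eval (C t)) =
      eval (x + t • w) p := by
    have hcomp : (eval x).comp ((eval (X + (C t : MvPolynomial σ R) • fun i => C (w i))).comp
        (map C)) = eval (x + t • w) := by
      ext i <;> simp
    rw [eval_restrictLine]
    exact congrArg (fun φ : MvPolynomial σ R →+* R => φ p) hcomp
  have hone := heval 1
  have hzero := heval 0
  rw [hconst, Polynomial.eval_C] at hone hzero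
  rw [one_smul] at hone
  rw [zero_smul, add_zero] at hzero
  rw [← hone, ← hzero]

theorem eval_eq_zero_of_X_pow_card_sub_X_eq [DecidableEq F] {p g r : MvPolynomial (Fin (k + 1)) F}
    (hp : p.totalDegree ≤ q) (hlead : p.coeff (Finsupp.single 0 q) ≠ 0)
    (hcard : q * Fintype.card F ^ k ≤ (Finset.univ.filter fun x => eval x p = 0).card)
    (hgr : X 0 ^ Fintype.card F - X 0 = p * g + r) (hr : r.degreeOf 0 < q)
    (x : Fin (k + 1) → F) : eval x r = 0 := by
  have hv (y) : (restrictLine y (Pi.single 0 1) p).coeff q ≠ 0 := by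
    rwa [coeff_restrictLine_eq_eval_homogeneousComponent hp,
      ← coeff_restrictLine_eq_eval_homogeneousComponent hp 0, coeff_restrictLine_zero_single]
  have hline : restrictLine x (Pi.single 0 1) r = 0 := by
    refine Polynomial.eq_zero_of_natDegree_lt_card_of_eval_eq_zero' _
      (Finset.univ.filter fun t : F => eval (x + t • Pi.single 0 1) p = 0) (fun t ht => ?_) ?_
    · have hev := congrArg (eval (x + t • Pi.single 0 1)) hgr
      rw [map_add, map_mul, (Finset.mem_filter.mp ht).2, zero_mul, zero_add] at hev
      rw [eval_restrictLine, ← hev, map_sub, map_pow, FiniteField.pow_card, sub_self]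
    · rw [card_line_zeros_eq hv hp (by
        simpa [pow_succ', mul_left_comm q] using Nat.mul_le_mul_left (Fintype.card F) hcard)]
      exact (natDegree_restrictLine_single_le _ _ _).trans_lt hr
  rw [← coeff_zero_restrictLine x (Pi.single 0 1), hline, Polynomial.coeff_zero]

theorem exists_dvd_sum_X_pow_card_sub_X [DecidableEq F] {p : MvPolynomial (Fin (k + 1)) F}
    (hp : p.totalDegree ≤ q) (hq0 : 0 < q) (hq : q < Fintype.card F)
    (hlead : p.coeff (Finsupp.single 0 q) ≠ 0)
    (hcard : q * Fintype.card F ^ k ≤ (Finset.univ.filter fun x => eval x p = 0).card) :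
    ∃ b : Fin (k + 1) → F, b 0 = 1 ∧ p ∣ ∑ i, C (b i) * (X i ^ Fintype.card F - X i) := by
  have hp0 : p ≠ 0 := by
    rintro rfl
    simp at hlead
  obtain ⟨g, r, hgr, hg, hr⟩ := MonomialOrder.degLex.div_single (b := p)
    (isUnit_iff_ne_zero.mpr (MonomialOrder.leadingCoeff_ne_zero_iff.mpr hp0))
    (X 0 ^ Fintype.card F - X 0)
  have hrdeg : r.totalDegree ≤ Fintype.card F := by
    rw [eq_sub_of_add_eq' hgr.symm, mul_comm]
    exact (totalDegree_sub _ _).trans (max_le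
      (totalDegree_X_pow_card_sub_X 0).le
      ((degLex_totalDegree_monotone hg).trans (totalDegree_X_pow_card_sub_X 0).le))
  have hr0 (d) (hd : d ∈ r.support) : d 0 < q := by
    contrapose! hr
    refine ⟨d, hd, ?_⟩
    rw [degLex_degree_eq_single hp hlead]
    exact Finsupp.single_le_iff.mpr hr
  have hrzero := eval_eq_zero_of_X_pow_card_sub_X_eq hp hlead hcard (mul_comm g p ▸ hgr)
    ((degreeOf_lt_iff hq0).mpr hr0)
  obtain ⟨c, hc⟩ := exists_eq_sum_X_pow_card_sub_X hrdeg hrzero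
  have hc0 : c 0 = 0 := by
    have hcoeff : r.coeff (Finsupp.single 0 (Fintype.card F)) = 0 := by
      by_contra h
      simpa using (hr0 _ (mem_support_iff.mpr h)).trans hq
    simpa [hc, coeff_sum, coeff_C_mul, coeff_X_pow, coeff_X, Finsupp.single_left_inj,
      Finsupp.single_eq_single_iff, Fintype.one_lt_card.ne] using hcoeff
  refine ⟨Pi.single 0 1 - c, by simp [hc0], g, ?_⟩
  rw [mul_comm, eq_sub_of_add_eq hgr.symm, hc]
  simp [sub_mul, Finset.sum_sub_distrib, Pi.single_apply, apply_ite C, ite_mul]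

theorem eval_add_eq_of_dvd_sum_X_pow_card_sub_X {σ : Type*} [Fintype σ] {p : MvPolynomial σ F}
    {b : σ → F} (hb : b ≠ 0) (hdvd : p ∣ ∑ i, C (b i) * (X i ^ Fintype.card F - X i))
    {w : σ → F} (hw : ∑ i, b i * w i = 0) (x : σ → F) : eval (x + w) p = eval x p := by
  have hfrob : ∑ i, C (b i) * (X i ^ Fintype.card F - X i) =
      (∑ i, C (b i) * X i : MvPolynomial σ F) ^ Fintype.card F - ∑ i, C (b i) * X i := by
    simp_rw [sum_C_mul_X_pow_card, mul_sub, Finset.sum_sub_distrib]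
  have hlinear : restrictLine X (fun i => C (w i)) (map C (∑ i, C (b i) * X i)) =
      Polynomial.C (∑ i, C (b i) * X i) := by
    simp only [restrictLine, map_sum, map_mul, map_C, map_X, aeval_X, aeval_C, mul_add,
      Finset.sum_add_distrib, Polynomial.algebraMap_eq, ← mul_assoc, ← Finset.sum_mul]
    simp only [← map_mul, ← map_sum, hw, map_zero, zero_mul, add_zero]
  refine eval_add_eq_of_dvd hdvd (fun h => hb (funext fun i => ?_)) ?_ x
  · classical
    have hcoeff := congrArg (coeff (Finsupp.single i (Fintype.card F))) h
    simpa [coeff_sum, coeff_C_mul, coeff_X_pow, coeff_X, Finsupp.single_left_inj,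
      Finsupp.single_eq_single_iff, Fintype.one_lt_card.ne] using hcoeff
  · rw [hfrob, map_sub, map_pow, restrictLine, map_sub, map_pow, ← restrictLine.eq_1, hlinear,
      map_sub, map_pow]

theorem exists_eval_eq_eval_smul_single [DecidableEq F] {p : MvPolynomial (Fin (k + 1)) F}
    (hp : p.totalDegree ≤ q) (hq0 : 0 < q) (hq : q < Fintype.card F)
    (hlead : p.coeff (Finsupp.single 0 q) ≠ 0)
    (hcard : q * Fintype.card F ^ k ≤ (Finset.univ.filter fun x => eval x p = 0).card) :
    ∃ l : Dual F (Fin (k + 1) → F), l (Pi.single 0 1) = 1 ∧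
      ∀ x, eval x p = eval (l x • Pi.single 0 1) p := by
  obtain ⟨b, hb, hdvd⟩ := exists_dvd_sum_X_pow_card_sub_X hp hq0 hq hlead hcard
  have hb0 : b ≠ 0 := fun h => one_ne_zero (α := F) (by rw [← hb, h, Pi.zero_apply])
  let l : Dual F (Fin (k + 1) → F) := ∑ i, b i • LinearMap.proj i
  have hl (x) : l x = ∑ i, b i * x i := by simp [l]
  have hl0 : l (Pi.single 0 1) = 1 := by simp [hl, hb, Pi.single_apply]
  refine ⟨l, hl0, fun x => ?_⟩
  have hker : l (l x • Pi.single 0 1 - x) = 0 := by simp [hl0]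
  rw [← eval_add_eq_of_dvd_sum_X_pow_card_sub_X hb0 hdvd ((hl _).symm.trans hker) x,
    add_sub_cancel]

theorem card_zeros_le {p : MvPolynomial (Fin (k + 1)) F} [DecidableEq F] (hp : p ≠ 0) :
    (Finset.univ.filter fun x => eval x p = 0).card ≤ p.totalDegree * Fintype.card F ^ k := by
  have h := schwartz_zippel_totalDegree hp (Finset.univ : Finset F)
  have hc : 0 < Fintype.card F := Fintype.card_pos
  rw [Fintype.piFinset_univ, Finset.card_univ, div_le_div_iff₀ (by positivity) (by positivity),
    pow_succ, ← mul_assoc] at h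
  exact_mod_cast le_of_mul_le_mul_right h (by positivity)

theorem exists_eval_eq_eval_smul [DecidableEq F] {p : MvPolynomial (Fin (k + 1)) F} (hp0 : p ≠ 0)
    (hp : p.totalDegree ≤ q) (hq0 : 0 < q) (hq : q < Fintype.card F)
    (hcard : q * Fintype.card F ^ k ≤ (Finset.univ.filter fun x => eval x p = 0).card) :
    ∃ (v : Fin (k + 1) → F) (l : Dual F (Fin (k + 1) → F)), l v = 1 ∧
      (restrictLine 0 v p).coeff q ≠ 0 ∧ ∀ x, eval x p = eval (l x • v) p := by
  have hdeg : p.totalDegree = q :=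
    hp.antisymm (Nat.le_of_mul_le_mul_right (hcard.trans (card_zeros_le hp0)) (by positivity))
  obtain ⟨v, hv⟩ : ∃ v, (restrictLine 0 v p).coeff q ≠ 0 := by
    simp_rw [coeff_restrictLine_eq_eval_homogeneousComponent hp]
    by_contra! h
    have hzero := (homogeneousComponent_isHomogeneous q p).eq_zero_of_forall_eval_eq_zero_of_le_card
      h (by simpa using hq.le)
    obtain ⟨d, hd, hdq⟩ := Finset.exists_mem_eq_sup p.support (support_nonempty.mpr hp0)
      fun d => d.sum fun _ e => e
    refine mem_support_iff.mp hd ?_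
    have hdq' : d.degree = q := by
      rw [← hdeg, totalDegree, hdq]
      rfl
    rw [← coeff_zero d, ← hzero, coeff_homogeneousComponent, if_pos hdq']
  have hv0 : v ≠ 0 := by
    rintro rfl
    refine hv (Polynomial.coeff_eq_zero_of_natDegree_lt ?_)
    simpa [restrictLine] using hq0
  obtain ⟨A, hA⟩ := exists_linearEquiv_apply_eq (K := F)
    (Pi.single_ne_zero_iff.mpr one_ne_zero : (Pi.single 0 1 : Fin (k + 1) → F) ≠ 0) hv0
  set p' := restrictAffine 0 A.toLinearMap p with hp'
  have heval (x) : eval x p' = eval (A x) p := by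
    rw [hp', eval_restrictAffine, zero_add, LinearEquiv.coe_coe]
  have hline : restrictLine 0 (Pi.single 0 1) p' = restrictLine 0 v p := by
    rw [hp', restrictLine_restrictAffine, map_zero, add_zero, LinearEquiv.coe_coe, hA]
  obtain ⟨l, hl, hlp⟩ := exists_eval_eq_eval_smul_single
    ((totalDegree_restrictAffine_le _ _ _).trans hp) hq0 hq (p := p')
    (by rwa [← coeff_restrictLine_zero_single, hline])
    (hcard.trans (Finset.card_equiv A.symm.toEquiv (by simp [heval])).le)
  refine ⟨v, l ∘ₗ A.symm.toLinearMap, ?_, hv, fun x => ?_⟩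
  · rw [← hl, ← hA]
    simp
  · rw [← A.apply_symm_apply x, ← heval, hlp, heval, map_smul, hA]
    simp

end SchwartzZippel

section Counting

variable {F V : Type*} [Field F] [AddCommGroup V] [Module F V]

theorem ncard_eq_one_add_mul_ncard_rep_mem [Finite V] {Z : Set V} (h0 : (0 : V) ∈ Z)
    (hsmul : ∀ c : F, ∀ v ∈ Z, c • v ∈ Z) :
    Z.ncard = 1 + (Nat.card F - 1) * {P : Projectivization F V | P.rep ∈ Z}.ncard := by
  let scale (x : Projectivization F V × Fˣ) : V := (x.2 : F) • x.1.rep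
  have hscale : Function.Injective scale := by
    rintro ⟨P, c⟩ ⟨P', c'⟩ (h : (c : F) • P.rep = (c' : F) • P'.rep)
    obtain rfl : P = P' := by
      rw [← P.mk_rep, ← P'.mk_rep, Projectivization.mk_eq_mk_iff]
      refine ⟨c⁻¹ * c', ?_⟩
      rw [mul_smul, Units.smul_def c', ← h, ← Units.smul_def, inv_smul_smul]
    exact Prod.ext rfl (Units.ext (smul_left_injective F P.rep_nonzero h))
  have himage : Z \ {0} = scale '' ({P | P.rep ∈ Z} ×ˢ Set.univ) := by
    ext v
    constructor
    · rintro ⟨hv, hv0 : v ≠ 0⟩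
      obtain ⟨c, hc⟩ := Projectivization.exists_smul_eq_mk_rep F v hv0
      refine ⟨(Projectivization.mk F v hv0, c⁻¹), ⟨?_, Set.mem_univ _⟩, ?_⟩
      · have hmem := hsmul c v hv
        rwa [← Units.smul_def, hc] at hmem
      · simp only [scale, ← hc, ← Units.smul_def, inv_smul_smul]
    · rintro ⟨⟨P, c⟩, ⟨hP, -⟩, rfl⟩
      exact ⟨hsmul _ _ hP, smul_ne_zero c.ne_zero P.rep_nonzero⟩
  rw [← Set.ncard_sdiff_singleton_add_one h0, himage, Set.ncard_image_of_injective _ hscale,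
    Set.ncard_prod, Set.ncard_univ, Nat.card_units]
  ring

theorem ncard_zeros_inter_eq {F : Type} [Field F] [Finite F] {n d : ℕ} (hd : d ≠ 0)
    {f : MvPolynomial (Fin n) F} (hf : f.IsHomogeneous d) (W : Submodule F (Fin n → F)) :
    (↑W ∩ {v | eval v f = 0}).ncard =
      1 + (Nat.card F - 1) * (hypersurfacePts f ∩ projPts W).ncard := by
  have hsmul (c : F) (v : Fin n → F) (hv : v ∈ ↑W ∩ {v | eval v f = 0}) :
      c • v ∈ ↑W ∩ {v | eval v f = 0} := by
    refine ⟨W.smul_mem c hv.1, ?_⟩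
    simp [eval_smul_of_isHomogeneous hf, hv.2.out]
  have hzero : (0 : Fin n → F) ∈ ↑W ∩ {v | eval v f = 0} := by
    refine ⟨W.zero_mem, ?_⟩
    simpa [hd] using eval_smul_of_isHomogeneous hf 0 0
  rw [ncard_eq_one_add_mul_ncard_rep_mem hzero hsmul]
  congr 3
  ext P
  simp [hypersurfacePts, projPts, Projectivization.submodule_eq, and_comm]

/-- A special case of the Bose–Burton theorem. -/
theorem exists_submodule_coe_eq_of_ncard_mul_le [Finite F] [Finite V] {T : Set V}
    (hsmul : ∀ c : F, ∀ v ∈ T, c • v ∈ T)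
    (hmeet : ∀ v w : V, ∃ y z : F, (y ≠ 0 ∨ z ≠ 0) ∧ y • v + z • w ∈ T)
    (hcard : T.ncard * Nat.card F ≤ Nat.card V) : ∃ P : Submodule F V, (P : Set V) = T := by
  have hsub {x y : V} (hx : x ∈ T) (hy : y ∈ T) : x - y ∈ T := by
    by_contra hw
    let shift (t : T × F) : V := t.1 + t.2 • (x - y)
    have hsurj : Function.Surjective shift := by
      intro v
      obtain ⟨a, b, hab, hT⟩ := hmeet v (x - y)
      have ha : a ≠ 0 := by
        rintro rfl
        have hb : b ≠ 0 := by simpa using hab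
        exact hw (by simpa [smul_smul, inv_mul_cancel₀ hb] using hsmul b⁻¹ _ hT)
      refine ⟨(⟨a⁻¹ • (a • v + b • (x - y)), hsmul _ _ hT⟩, -(a⁻¹ * b)), ?_⟩
      simp [shift, smul_smul, ha]
    have hinj : Function.Injective shift := by
      refine (hsurj.bijective_of_nat_card_le ?_).injective
      rwa [Nat.card_prod, Nat.card_coe_set_eq]
    have hcollision : shift (⟨x, hx⟩, 0) = shift (⟨y, hy⟩, 1) := by simp [shift]
    simpa using congrArg Prod.snd (hinj hcollision)
  have h0 : (0 : V) ∈ T := by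
    obtain ⟨y, z, -, h⟩ := hmeet 0 0
    simpa using h
  exact ⟨{ carrier := T
           zero_mem' := h0
           add_mem' := fun hx hy => by simpa using hsub hx (hsub h0 hy)
           smul_mem' := fun c v => hsmul c v }, rfl⟩

end Counting

section SpecialSubspace

variable {F σ : Type*} [Field F] [Fintype F] {q : ℕ} {f : MvPolynomial σ F}
  {W : Submodule F (σ → F)} [Finite σ]

theorem exists_eval_smul_add_smul_eq_zero (hq : 2 < q) (hF : Fintype.card F = q ^ 2)
    (hf : f.IsHomogeneous (q + 1)) (hW : W ≠ ⊤)
    (hcard : (W : Set (σ → F))ᶜ.ncard ≤ q * ((W : Set (σ → F))ᶜ ∩ {v | eval v f = 0}).ncard)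
    {v w : σ → F} (hv : v ∈ W) (hw : w ∈ W) :
    ∃ y z : F, (y ≠ 0 ∨ z ≠ 0) ∧ eval (y • v + z • w) f = 0 := by
  classical
  by_contra! hnone
  obtain ⟨a, -, ha⟩ := exists_card_le_mul_ncard (m := fun i : F × F => i.1 • v + i.2 • w)
    (Set.nonempty_compl.mpr fun h => hW (SetLike.coe_injective h))
    (fun a i => (Submodule.add_mem_iff_left W
      (W.add_mem (W.smul_mem _ hv) (W.smul_mem _ hw))).not) hcard
  let g := restrictAffine 0 (Fintype.linearCombination F ![a, v, w]) f
  have hg (x : Fin 3 → F) : eval x g = eval (x 0 • a + x 1 • v + x 2 • w) f := by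
    rw [eval_restrictAffine, zero_add, Fintype.linearCombination_apply, Fin.sum_univ_three]
    rfl
  have hinf (x : Fin 3 → F) (hx : x ≠ 0) (h0 : x 0 = 0) : eval x g ≠ 0 := by
    rw [hg, h0, zero_smul, zero_add]
    refine hnone _ _ ?_
    contrapose! hx
    ext i
    fin_cases i
    exacts [h0, hx.1, hx.2]
  have hlt := card_affineZeros_lt hq hF (isHomogeneous_restrictAffine_zero _ hf) hinf
  have hle : {i : F × F | a + (i.1 • v + i.2 • w) ∈ {v | eval v f = 0}}.ncard ≤
      (affineZeros g).card := by
    rw [← Set.ncard_coe_finset]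
    refine Set.ncard_le_ncard_of_injOn (fun i => ![1, i.1, i.2]) (fun i hi => ?_)
      fun i _ j _ hij => ?_
    · simpa [mem_affineZeros, hg, add_assoc] using hi
    · simpa [Prod.ext_iff] using hij
  rw [Fintype.card_prod, hF] at ha
  have hlt' := (Nat.mul_le_mul_left q hle).trans_lt (Nat.mul_lt_mul_of_pos_left hlt (by omega))
  exact absurd ha (not_le.mpr (hlt'.trans_eq (by ring)))

theorem exists_le_forall_eval_eq_zero_iff (hq : 2 < q) (hF : Fintype.card F = q ^ 2)
    (hf : f.IsHomogeneous (q + 1)) (hW : W ≠ ⊤)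
    (hcompl : (W : Set (σ → F))ᶜ.ncard ≤ q * ((W : Set (σ → F))ᶜ ∩ {v | eval v f = 0}).ncard)
    (hcard : (↑W ∩ {v | eval v f = 0}).ncard * Fintype.card F ≤ Nat.card W) :
    ∃ P ≤ W, ∀ v ∈ W, eval v f = 0 ↔ v ∈ P := by
  let T : Set W := Subtype.val ⁻¹' {v | eval v f = 0}
  have himage : Subtype.val '' T = ↑W ∩ {v | eval v f = 0} :=
    Subtype.image_preimage_coe (W : Set (σ → F)) _
  obtain ⟨P, hP⟩ := exists_submodule_coe_eq_of_ncard_mul_le (F := F) (T := T)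
    (fun c v (hv : eval (v : σ → F) f = 0) => by simp [T, eval_smul_of_isHomogeneous hf, hv])
    (fun v w => exists_eval_smul_add_smul_eq_zero hq hF hf hW hcompl v.2 w.2)
    (by rwa [← Set.ncard_image_of_injective _ Subtype.val_injective, himage,
      Nat.card_eq_fintype_card])
  refine ⟨P.map W.subtype, Submodule.map_subtype_le W P, fun v hv => ?_⟩
  have hmem : (⟨v, hv⟩ : W) ∈ P ↔ eval v f = 0 := Set.ext_iff.mp hP ⟨v, hv⟩
  simp [hv, hmem]

end SpecialSubspace

section TopDegree

variable {F σ ι : Type*} [Field F] [Fintype ι] [DecidableEq ι]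

theorem totalDegree_restrictAffine_le_of_forall_eval_eq_zero {n : ℕ} {f : MvPolynomial σ F}
    (hf : f.IsHomogeneous (n + 1)) (hn : (n + 1 : Cardinal) ≤ Cardinal.mk F)
    {M : (ι → F) →ₗ[F] σ → F} (hM : ∀ x, eval (M x) f = 0) (a : σ → F) :
    (restrictAffine a M f).totalDegree ≤ n := by
  have hdeg : (restrictAffine a M f).totalDegree ≤ n + 1 :=
    (totalDegree_restrictAffine_le a M f).trans hf.totalDegree_le
  have hzero : homogeneousComponent (n + 1) (restrictAffine a M f) = 0 := by
    refine (homogeneousComponent_isHomogeneous _ _).eq_zero_of_forall_eval_eq_zero_of_le_card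
      (fun x => ?_) (by exact_mod_cast hn)
    rw [← coeff_restrictLine_eq_eval_homogeneousComponent hdeg 0, restrictLine_restrictAffine,
      coeff_restrictLine_of_isHomogeneous hf, hM]
  refine Finset.sup_le fun d hd => Nat.le_of_lt_succ (lt_of_le_of_ne
    ((le_totalDegree hd).trans hdeg) fun hd' => mem_support_iff.mp hd ?_)
  have hcoeff := congrArg (coeff d) hzero
  rwa [coeff_homogeneousComponent, if_pos (show d.degree = n + 1 from hd'),
    coeff_zero] at hcoeff

end TopDegree

/-- A flag `P < W` that behaves, with respect to the hypersurface `f = 0` of degree `q + 1` over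
the field with `q ^ 2` elements, like a generator of a non-singular Hermitian variety of
`PG(2m, q ^ 2)` inside a subspace of one dimension more: `W` meets the hypersurface exactly in `P`,
one vector in `q` outside `W` is a zero of `f`, and no subspace of the dimension of `W` is contained
in the hypersurface. -/
structure IsHermitianFlag (q : ℕ) {F σ : Type*} [Field F] [Fintype F] [Fintype σ]
    (f : MvPolynomial σ F) (P W : Submodule F (σ → F)) : Prop where
  two_lt : 2 < q
  card_eq : Fintype.card F = q ^ 2
  isHomogeneous : f.IsHomogeneous (q + 1)
  le : P ≤ W
  two_le_finrank : 2 ≤ finrank F P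
  finrank_eq : finrank F W = finrank F P + 1
  card_index : Fintype.card σ = 2 * finrank F P + 1
  eval_eq_zero_iff : ∀ v ∈ W, eval v f = 0 ↔ v ∈ P
  mul_ncard_compl : q * ((W : Set (σ → F))ᶜ ∩ {v | eval v f = 0}).ncard = (W : Set (σ → F))ᶜ.ncard
  exists_eval_ne_zero : ∀ U : Submodule F (σ → F), finrank F U = finrank F W →
    ∃ v ∈ U, eval v f ≠ 0

namespace IsHermitianFlag

variable {F σ : Type*} [Field F] [Fintype F] [Fintype σ] {q : ℕ} {f : MvPolynomial σ F}
  {P W : Submodule F (σ → F)} (H : IsHermitianFlag q f P W)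

include H

theorem eval_eq_zero {x : σ → F} (hx : x ∈ P) : eval x f = 0 :=
  (H.eval_eq_zero_iff x (H.le hx)).mpr hx

theorem add_one_lt_card : q + 1 < Fintype.card F := by
  rw [H.card_eq]
  nlinarith [H.two_lt]

theorem exists_eval_add_ne_zero {a : σ → F} (ha : a ∉ W) : ∃ x ∈ P, eval (a + x) f ≠ 0 := by
  have haP : a ∉ P := fun h => ha (H.le h)
  obtain ⟨v, hv, hfv⟩ := H.exists_eval_ne_zero (P ⊔ F ∙ a) (by
    rw [H.finrank_eq, Submodule.finrank_sup_span_singleton haP])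
  obtain ⟨x, hx, y, hy, rfl⟩ := Submodule.mem_sup.mp hv
  obtain ⟨c, rfl⟩ := Submodule.mem_span_singleton.mp hy
  have hc : c ≠ 0 := by
    rintro rfl
    exact hfv (by rw [zero_smul, add_zero, H.eval_eq_zero hx])
  refine ⟨c⁻¹ • x, P.smul_mem _ hx, fun h => hfv ?_⟩
  rw [show x + c • a = c • (a + c⁻¹ • x) by rw [smul_add, smul_inv_smul₀ hc, add_comm],
    eval_smul_of_isHomogeneous H.isHomogeneous, h, mul_zero]

theorem exists_parametrization : ∃ (k : ℕ) (M : (Fin (k + 1) → F) →ₗ[F] σ → F),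
    Function.Injective M ∧ LinearMap.range M = P := by
  obtain ⟨k, hk⟩ := Nat.exists_eq_add_of_le' (one_le_two.trans H.two_le_finrank)
  let e := (finBasisOfFinrankEq F P hk).equivFun.symm
  refine ⟨k, P.subtype ∘ₗ e.toLinearMap, P.subtype_injective.comp e.injective, ?_⟩
  rw [LinearEquiv.range_comp, Submodule.range_subtype]

section Parametrized

variable {k : ℕ} {M : (Fin (k + 1) → F) →ₗ[F] σ → F}

theorem totalDegree_restrictAffine_le (hM : LinearMap.range M = P) (a : σ → F) :
    (restrictAffine a M f).totalDegree ≤ q :=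
  totalDegree_restrictAffine_le_of_forall_eval_eq_zero H.isHomogeneous
    (by simpa using mod_cast H.add_one_lt_card.le)
    (fun x => H.eval_eq_zero (hM ▸ LinearMap.mem_range_self M x)) a

theorem restrictAffine_ne_zero (hM : LinearMap.range M = P) {a : σ → F} (ha : a ∉ W) :
    restrictAffine a M f ≠ 0 := by
  intro h
  obtain ⟨x, hx, hne⟩ := H.exists_eval_add_ne_zero ha
  obtain ⟨y, rfl⟩ := hM ▸ hx
  exact hne (by rw [← eval_restrictAffine, h, map_zero])

theorem ncard_zeros_restrictAffine (hM : LinearMap.range M = P) {a : σ → F} (ha : a ∉ W) :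
    {x | eval x (restrictAffine a M f) = 0}.ncard = q * Fintype.card F ^ k := by
  classical
  have hMW (x) : M x ∈ W := H.le (hM ▸ LinearMap.mem_range_self M x)
  simp_rw [eval_restrictAffine]
  refine ncard_eq_of_forall_ncard_le (S := (W : Set (σ → F))ᶜ) (Z := {v | eval v f = 0})
    (fun a x => (Submodule.add_mem_iff_left W (hMW x)).not) ?_ (fun a ha => ?_) ha
  · rw [← H.mul_ncard_compl, Fintype.card_pi_const, pow_succ, H.card_eq]
    exact (by ring : _ = _).le
  · simp_rw [Set.mem_ofPred_eq, ← eval_restrictAffine, Set.ncard_eq_toFinset_card',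
      Set.toFinset_ofPred]
    exact (card_zeros_le (H.restrictAffine_ne_zero hM ha)).trans
      (Nat.mul_le_mul_right _ (H.totalDegree_restrictAffine_le hM a))

end Parametrized

theorem natDegree_restrictLine_le (a : σ → F) {x : σ → F} (hx : x ∈ P) :
    (restrictLine a x f).natDegree ≤ q := by
  have hdeg := (_root_.natDegree_restrictLine_le a x f).trans H.isHomogeneous.totalDegree_le
  refine Nat.le_of_lt_succ (lt_of_le_of_ne hdeg fun h => ?_)
  have hlead : (restrictLine a x f).leadingCoeff = 0 := by
    rw [Polynomial.leadingCoeff, h, coeff_restrictLine_of_isHomogeneous H.isHomogeneous,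
      H.eval_eq_zero hx]
  rw [Polynomial.leadingCoeff_eq_zero] at hlead
  simp [hlead] at h

theorem exists_eval_add_eq {a : σ → F} (ha : a ∉ W) :
    ∃ v ∈ P, ∃ l : Dual F (σ → F), l v = 1 ∧ (restrictLine a v f).coeff q ≠ 0 ∧
      ∀ x ∈ P, eval (a + x) f = eval (a + l x • v) f := by
  classical
  obtain ⟨k, M, hinj, hM⟩ := H.exists_parametrization
  have hcard := (H.ncard_zeros_restrictAffine hM ha).ge
  rw [Set.ncard_eq_toFinset_card', Set.toFinset_ofPred] at hcard
  obtain ⟨v, l, hlv, hcoeff, heval⟩ := exists_eval_eq_eval_smul (H.restrictAffine_ne_zero hM ha)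
    (H.totalDegree_restrictAffine_le hM a) (by have := H.two_lt; omega)
    (by have := H.add_one_lt_card; omega) hcard
  obtain ⟨g, hg⟩ := M.exists_leftInverse_of_injective (LinearMap.ker_eq_bot.mpr hinj)
  have hgM (x) : g (M x) = x := LinearMap.congr_fun hg x
  refine ⟨M v, hM ▸ LinearMap.mem_range_self M v, l ∘ₗ g, ?_, ?_, ?_⟩
  · simp [hgM, hlv]
  · rwa [restrictLine_restrictAffine, map_zero, add_zero] at hcoeff
  · rintro x hx
    obtain ⟨y, rfl⟩ := hM ▸ hx
    simpa [eval_restrictAffine, hgM] using heval y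

theorem exists_restrictLine_eq_comp {a : σ → F} (ha : a ∉ W) :
    ∃ v ∈ P, ∃ l : Dual F (σ → F), l v = 1 ∧ (restrictLine a v f).coeff q ≠ 0 ∧
      ∀ x ∈ P, restrictLine a x f =
        (restrictLine a v f).comp (Polynomial.C (l x) * Polynomial.X) := by
  obtain ⟨v, hv, l, hlv, hcoeff, heval⟩ := H.exists_eval_add_eq ha
  refine ⟨v, hv, l, hlv, hcoeff, fun x hx => ?_⟩
  refine Polynomial.eq_of_natDegree_lt_card_of_eval_eq _ _ Function.injective_id (fun t => ?_) ?_
  · have h := heval (t • x) (P.smul_mem t hx)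
    simpa only [id, eval_restrictLine, Polynomial.eval_comp, Polynomial.eval_mul, Polynomial.eval_C,
      Polynomial.eval_X, map_smul, smul_eq_mul, mul_comm t] using h
  · have hcomp : ((restrictLine a v f).comp (Polynomial.C (l x) * Polynomial.X)).natDegree ≤ q := by
      refine Polynomial.natDegree_comp_le.trans ?_
      exact (Nat.mul_le_mul (H.natDegree_restrictLine_le a hv)
        ((Polynomial.natDegree_C_mul_le _ _).trans Polynomial.natDegree_X_le)).trans (mul_one q).le
    have := H.add_one_lt_card
    exact (max_le (H.natDegree_restrictLine_le a hx) hcomp).trans_lt (by omega)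

end IsHermitianFlag

section Conjugation

variable {F : Type*} [Field F] [Fintype F] {q : ℕ}

theorem add_pow_of_card_eq_pow {n : ℕ} (hF : Fintype.card F = q ^ n) (x y : F) :
    (x + y) ^ q = x ^ q + y ^ q := by
  obtain ⟨p, hchar⟩ := CharP.exists F
  obtain ⟨m, hp, hcard⟩ := FiniteField.card F p
  have := Fact.mk hp
  have hn : n ≠ 0 := by
    rintro rfl
    exact Fintype.one_lt_card.ne' (hF.trans (pow_zero q))
  obtain ⟨k, -, rfl⟩ := (Nat.dvd_prime_pow hp).mp ((dvd_pow_self q hn).trans (hF ▸ hcard).dvd)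
  exact add_pow_char_pow x y p k

theorem pow_pow_eq_self_of_card_eq_sq (hF : Fintype.card F = q ^ 2) (x : F) : (x ^ q) ^ q = x := by
  rw [← pow_mul, ← sq, ← hF, FiniteField.pow_card]

end Conjugation

section LinePencil

variable {R σ : Type*} [CommRing R]

theorem restrictLine_cons_zero {n : ℕ} (s : Fin n → R) (h : MvPolynomial (Fin (n + 1)) R) :
    restrictLine (Fin.cons 0 s) (Pi.single 0 1) h = (finSuccEquiv R n h).map (eval s) := by
  have hcomp : (aeval fun i => Polynomial.C ((Fin.cons 0 s : Fin (n + 1) → R) i) +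
      Polynomial.C ((Pi.single 0 1 : Fin (n + 1) → R) i) * Polynomial.X :
        MvPolynomial (Fin (n + 1)) R →ₐ[R] Polynomial R).toRingHom =
      (Polynomial.mapRingHom (eval s)).comp (finSuccEquiv R n).toRingEquiv.toRingHom := by
    ext i : 1
    · ext : 1
      simp [finSuccEquiv_apply]
    · refine Fin.cases ?_ (fun j => ?_) i <;> simp [finSuccEquiv_apply]
  exact congrArg (fun φ : MvPolynomial (Fin (n + 1)) R →+* Polynomial R => φ h) hcomp

theorem exists_eval_eq_coeff_restrictLine {f : MvPolynomial σ R} {n k : ℕ} (hf : f.IsHomogeneous n)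
    (hk : k ≤ n) (w e x : σ → R) :
    ∃ G : Polynomial R, G.natDegree ≤ n - k ∧
      (∀ s, G.eval s = (restrictLine (w + s • e) x f).coeff k) ∧
      G.coeff (n - k) = (restrictLine e x f).coeff k := by
  let M := Fintype.linearCombination R ![x, w, e]
  let p := (finSuccEquiv R 2 (restrictAffine 0 M f)).coeff k
  have hp : p.IsHomogeneous (n - k) :=
    (isHomogeneous_restrictAffine_zero M hf).finSuccEquiv_coeff_isHomogeneous k _
      (Nat.add_sub_cancel' hk)
  have heval (r s : R) : eval ![r, s] p = (restrictLine (r • w + s • e) x f).coeff k := by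
    have hline := restrictLine_cons_zero ![r, s] (restrictAffine 0 M f)
    rw [restrictLine_restrictAffine] at hline
    have hcoeff := congrArg (Polynomial.coeff · k) hline
    simpa [M, Fintype.linearCombination_apply, Fin.sum_univ_three, p, Polynomial.coeff_map]
      using hcoeff.symm
  refine ⟨restrictLine ![1, 0] ![0, 1] p,
    (natDegree_restrictLine_le _ _ _).trans hp.totalDegree_le, fun s => ?_, ?_⟩
  · simpa [eval_restrictLine] using heval 1 s
  · simpa [coeff_restrictLine_of_isHomogeneous hp] using heval 0 1

theorem coeff_restrictLine_eq_polarForm [Fintype σ] {f : MvPolynomial σ R} {n : ℕ}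
    (hf : f.IsHomogeneous (n + 1)) (a x : σ → R) :
    (restrictLine a x f).coeff n = polarForm f x a := by
  rw [coeff_restrictLine_swap hf n.le_succ, Nat.add_sub_cancel_left, coeff_one_restrictLine,
    polarForm_apply]

end LinePencil

section Agreement

variable {F V V' : Type*} [Field F] [AddCommGroup V] [Module F V] [AddCommGroup V'] [Module F V']

theorem linearMap_eq_of_forall_notMem {W : Submodule F V} (hW : W ≠ ⊤) {φ ψ : V →ₗ[F] V'}
    (h : ∀ v ∉ W, φ v = ψ v) : φ = ψ := by
  obtain ⟨b, hb⟩ := SetLike.exists_not_mem_of_ne_top W hW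
  ext v
  by_cases hv : v ∈ W
  · have hvb := h (v + b) fun h' => hb ((Submodule.add_mem_iff_right W hv).mp h')
    rwa [map_add, map_add, h b hb, add_left_inj] at hvb
  · exact h v hv

end Agreement

namespace IsHermitianFlag

variable {F σ : Type*} [Field F] [Fintype F] [Fintype σ] {q : ℕ} {f : MvPolynomial σ F}
  {P W : Submodule F (σ → F)} (H : IsHermitianFlag q f P W)

include H

theorem add_pow (x y : F) : (x + y) ^ q = x ^ q + y ^ q :=
  add_pow_of_card_eq_pow H.card_eq x y

theorem pow_pow (x : F) : (x ^ q) ^ q = x :=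
  pow_pow_eq_self_of_card_eq_sq H.card_eq x

theorem ne_zero : q ≠ 0 :=
  (zero_lt_two.trans H.two_lt).ne'

theorem ne_top : W ≠ ⊤ := by
  rintro rfl
  have := H.finrank_eq
  have := H.two_le_finrank
  have := H.card_index
  rw [finrank_top, finrank_fintype_fun_eq_card] at *
  omega

theorem exists_dual_polarForm {a : σ → F} (ha : a ∉ W) :
    ∃ L : Dual F (σ → F), (∃ x ∈ P, L x = 1) ∧ (∀ x ∈ P, polarForm f x a = L x ^ q) ∧
      ∀ x ∈ P, ∀ y ∈ P, L y = 1 → ∀ k,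
        (restrictLine a x f).coeff k = (restrictLine a y f).coeff k * L x ^ k := by
  obtain ⟨v, hv, l, hlv, hδ, hline⟩ := H.exists_restrictLine_eq_comp ha
  have hcoeff (x) (hx : x ∈ P) (k : ℕ) :
      (restrictLine a x f).coeff k = (restrictLine a v f).coeff k * l x ^ k := by
    rw [hline x hx, Polynomial.comp_C_mul_X_coeff]
  set δ := (restrictLine a v f).coeff q
  have hδq : δ ^ q ≠ 0 := pow_ne_zero _ hδ
  refine ⟨δ ^ q • l, ⟨(δ ^ q)⁻¹ • v, P.smul_mem _ hv, ?_⟩, fun x hx => ?_,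
    fun x hx y hy hLy k => ?_⟩
  · simp [hlv, hδq]
  · rw [← coeff_restrictLine_eq_polarForm H.isHomogeneous, hcoeff x hx, LinearMap.smul_apply,
      smul_eq_mul, mul_pow, H.pow_pow]
  · rw [LinearMap.smul_apply, smul_eq_mul] at hLy
    rw [hcoeff x hx, hcoeff y hy, LinearMap.smul_apply, smul_eq_mul, mul_assoc, ← mul_pow,
      ← mul_assoc, mul_comm (l y), hLy, one_mul]

theorem polarForm_add {x y : σ → F} (hx : x ∈ P) (hy : y ∈ P) :
    polarForm f (x + y) = polarForm f x + polarForm f y := by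
  refine linearMap_eq_of_forall_notMem H.ne_top fun a ha => ?_
  obtain ⟨L, -, hL, -⟩ := H.exists_dual_polarForm ha
  rw [LinearMap.add_apply, hL _ (P.add_mem hx hy), hL x hx, hL y hy, map_add, H.add_pow]

theorem polarForm_smul {x : σ → F} (hx : x ∈ P) (c : F) :
    polarForm f (c • x) = c ^ q • polarForm f x := by
  refine linearMap_eq_of_forall_notMem H.ne_top fun a ha => ?_
  obtain ⟨L, -, hL, -⟩ := H.exists_dual_polarForm ha
  rw [LinearMap.smul_apply, hL _ (P.smul_mem c hx), hL x hx, map_smul, smul_eq_mul, smul_eq_mul,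
    mul_pow]

section Basis

variable {ι : Type*} (b : Basis ι F P)

theorem polarForm_eq_sum [Fintype ι] (x : P) :
    polarForm f x = ∑ i, b.repr x i ^ q • polarForm f (b i : σ → F) := by
  let T : P →+ Dual F (σ → F) :=
    AddMonoidHom.mk' (fun x => polarForm f x) fun x y => H.polarForm_add x.2 y.2
  calc T x = T (∑ i, b.repr x i • b i) := by rw [b.sum_repr]
    _ = _ := by
      rw [map_sum]
      exact Finset.sum_congr rfl fun i _ => H.polarForm_smul (b i).2 _

theorem ker_pi_polarForm_and_range [Finite ι] :
    LinearMap.ker (LinearMap.pi fun i => polarForm f (b i : σ → F)) = W ∧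
      LinearMap.range (LinearMap.pi fun i => polarForm f (b i : σ → F)) = ⊤ := by
  have := Fintype.ofFinite ι
  set δ := LinearMap.pi fun i => polarForm f (b i : σ → F)
  have hker : LinearMap.ker δ ≤ W := by
    intro a ha
    by_contra haW
    obtain ⟨L, ⟨x, hx, hLx⟩, hL, -⟩ := H.exists_dual_polarForm haW
    have hδ (i) : polarForm f (b i : σ → F) a = 0 := congrFun (LinearMap.mem_ker.mp ha) i
    have hsum := LinearMap.congr_fun (H.polarForm_eq_sum b ⟨x, hx⟩) a
    simp [hL x hx, hLx, hδ] at hsum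
  have hrank := LinearMap.finrank_range_add_finrank_ker δ
  have hrange := Submodule.finrank_le (LinearMap.range δ)
  have hker_le := Submodule.finrank_mono hker
  have hcard := finrank_eq_card_basis b
  have := H.finrank_eq
  have := H.card_index
  simp only [finrank_fintype_fun_eq_card] at hrank hrange
  refine ⟨Submodule.eq_of_le_of_finrank_eq hker (by omega),
    Submodule.eq_top_of_finrank_eq ?_⟩
  rw [finrank_fintype_fun_eq_card]
  omega

end Basis

theorem polarForm_eq_zero {w x : σ → F} (hw : w ∈ W) (hx : x ∈ P) : polarForm f x w = 0 := by
  let b := finBasis F P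
  rw [← (H.ker_pi_polarForm_and_range b).1] at hw
  have hb (i) : polarForm f (b i : σ → F) w = 0 := congrFun (LinearMap.mem_ker.mp hw) i
  simpa [hb] using LinearMap.congr_fun (H.polarForm_eq_sum b ⟨x, hx⟩) w

theorem exists_polarForm_eq_pow (l : Dual F (σ → F)) :
    ∃ a, ∀ x ∈ P, polarForm f x a = l x ^ q := by
  let b := finBasis F P
  obtain ⟨a, ha⟩ := LinearMap.range_eq_top.mp (H.ker_pi_polarForm_and_range b).2
    fun i => l (b i) ^ q
  have hb (i) : polarForm f (b i : σ → F) a = l (b i) ^ q := congrFun ha i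
  let conj : F →+ F := AddMonoidHom.mk' (· ^ q) H.add_pow
  refine ⟨a, fun x hx => ?_⟩
  calc polarForm f x a = ∑ i, conj (b.repr ⟨x, hx⟩ i * l (b i)) := by
        simp [H.polarForm_eq_sum b ⟨x, hx⟩, hb, conj, mul_pow]
    _ = conj ((l ∘ₗ P.subtype) (∑ i, b.repr ⟨x, hx⟩ i • b i)) := by
        simp only [map_sum, map_smul, smul_eq_mul, LinearMap.comp_apply, Submodule.subtype_apply]
    _ = l x ^ q := by rw [b.sum_repr]; rfl

theorem coeff_restrictLine_eq {a x y : σ → F} (hx : x ∈ P) (hy : y ∈ P)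
    (hay : polarForm f y a = 1) (k : ℕ) :
    (restrictLine a x f).coeff k = (restrictLine a y f).coeff k * polarForm f x a ^ (q * k) := by
  have ha : a ∉ W := fun h => one_ne_zero (hay.symm.trans (H.polarForm_eq_zero h hy))
  obtain ⟨L, -, hL, hcoeff⟩ := H.exists_dual_polarForm ha
  have hLy : L y = 1 := by rw [← H.pow_pow (L y), ← hL y hy, hay, one_pow]
  rw [hcoeff x hx y hy hLy, hL x hx, pow_mul, H.pow_pow]

theorem coeff_restrictLine_eq_ite {w e x₀ x₁ : σ → F} (hx₀ : x₀ ∈ P) (hx₁ : x₁ ∈ P)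
    (hw₀ : polarForm f x₀ w = 1) (hw₁ : polarForm f x₁ w = 0) (he₀ : polarForm f x₀ e = 0)
    (he₁ : polarForm f x₁ e = 1) {k : ℕ} (hk : k ≠ 0) (hkq : k < q) :
    (restrictLine w x₀ f).coeff k = if k = 1 then (restrictLine e x₁ f).coeff 1 else 0 := by
  have hk' : k ≤ q + 1 := by omega
  obtain ⟨G, hGdeg, hG, -⟩ := exists_eval_eq_coeff_restrictLine H.isHomogeneous hk' w e x₀
  obtain ⟨K, hKdeg, hK, hKlead⟩ := exists_eval_eq_coeff_restrictLine H.isHomogeneous hk' w e x₁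
  have hKG : K = G * Polynomial.X ^ (q * k) := by
    refine Polynomial.eq_of_natDegree_lt_card_of_eval_eq _ _ Function.injective_id (fun s => ?_) ?_
    · simp [hG, hK, H.coeff_restrictLine_eq (a := w + s • e) hx₁ hx₀, hw₀, hw₁, he₀, he₁]
    · have hdeg := Polynomial.natDegree_mul_le (p := G) (q := Polynomial.X ^ (q * k))
      rw [Polynomial.natDegree_X_pow] at hdeg
      refine max_lt ((hKdeg.trans (Nat.sub_le _ _)).trans_lt H.add_one_lt_card) ?_
      rw [H.card_eq]
      obtain ⟨r, rfl⟩ := Nat.exists_eq_add_of_lt hkq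
      have : G.natDegree ≤ r + 2 := by omega
      nlinarith [H.two_lt]
  have hG0 : (restrictLine w x₀ f).coeff k = K.coeff (q * k) := by
    have h0 := hG 0
    rw [zero_smul, add_zero] at h0
    rw [← h0, hKG, Polynomial.coeff_mul_X_pow', if_pos le_rfl, Nat.sub_self,
      Polynomial.coeff_zero_eq_eval_zero]
  rw [hG0]
  split_ifs with h1
  · subst h1
    rwa [mul_one]
  · refine Polynomial.coeff_eq_zero_of_natDegree_lt (hKdeg.trans_lt ?_)
    have := Nat.mul_le_mul_left q (show 2 ≤ k by omega)
    omega

end IsHermitianFlag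

section Trinomial

theorem eval_eq_of_forall_coeff_eq_zero {R : Type*} [CommRing R] {p : Polynomial R} {q : ℕ}
    (hq : 2 ≤ q) (hdeg : p.natDegree ≤ q + 1) (hp : ∀ k, 2 ≤ k → k < q → p.coeff k = 0) (t : R) :
    p.eval t = p.coeff 0 + p.coeff 1 * t + p.coeff q * t ^ q + p.coeff (q + 1) * t ^ (q + 1) := by
  have hmiddle : ∑ k ∈ Finset.Ico 2 q, p.coeff k * t ^ k = 0 := by
    refine Finset.sum_eq_zero fun k hk => ?_
    rw [Finset.mem_Ico] at hk
    rw [hp k hk.1 hk.2, zero_mul]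
  rw [Polynomial.eval_eq_sum_range' (Nat.lt_succ_of_le hdeg), Finset.sum_range_succ,
    Finset.sum_range_succ, ← Finset.sum_range_add_sum_Ico _ hq, hmiddle, add_zero,
    Finset.sum_range_succ, Finset.sum_range_one, pow_zero, mul_one, pow_one]

end Trinomial

namespace IsHermitianFlag

variable {F σ : Type*} [Field F] [Fintype F] [Fintype σ] {q : ℕ} {f : MvPolynomial σ F}
  {P W : Submodule F (σ → F)} (H : IsHermitianFlag q f P W)

include H

theorem eval_add_eq {a x y : σ → F} (hx : x ∈ P) (hy : y ∈ P) (hay : polarForm f y a = 1)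
    (hcoeff : ∀ k, 2 ≤ k → k < q → (restrictLine a y f).coeff k = 0) :
    eval (a + x) f =
      polarForm f x a + (restrictLine a y f).coeff 1 * polarForm f x a ^ q + eval a f := by
  have hline := eval_eq_of_forall_coeff_eq_zero H.two_lt.le
    ((H.natDegree_restrictLine_le a hx).trans q.le_succ)
    (fun k hk hkq => by rw [H.coeff_restrictLine_eq hx hy hay, hcoeff k hk hkq, zero_mul]) 1
  rw [eval_restrictLine, one_smul, coeff_zero_restrictLine,
    coeff_restrictLine_eq_polarForm H.isHomogeneous, H.coeff_restrictLine_eq hx hy hay,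
    coeff_restrictLine_of_isHomogeneous H.isHomogeneous, H.eval_eq_zero hx] at hline
  rw [hline]
  ring

theorem exists_independent_of_dual {L : Dual F (σ → F)} {x₀ : σ → F} (hx₀ : x₀ ∈ P)
    (hL : L x₀ = 1) :
    ∃ x₁ ∈ P, L x₁ = 0 ∧ ∃ l : Dual F (σ → F), l x₀ = 0 ∧ l x₁ = 1 := by
  have hx₀' : (⟨x₀, hx₀⟩ : P) ≠ 0 := by
    rw [Ne, Subtype.ext_iff]
    rintro rfl
    simp at hL
  obtain ⟨⟨y, hy⟩, hli⟩ :=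
    exists_linearIndependent_pair_of_one_lt_finrank H.two_le_finrank hx₀'
  obtain ⟨l, hl⟩ := exists_dual_of_linearIndependent
    (hli.map' P.subtype P.ker_subtype) ![0, 1]
  have hl₀ : l x₀ = 0 := hl 0
  have hl₁ : l y = 1 := hl 1
  exact ⟨y - L y • x₀, P.sub_mem hy (P.smul_mem _ hx₀), by simp [hL], l, hl₀, by simp [hl₀, hl₁]⟩

theorem exists_eval_add_add_eq {u : σ → F} (hu : u ∉ W) :
    ∃ L : Dual F (σ → F), (∃ x ∈ P, L x = 1) ∧ ∃ c : F, ∀ w ∈ W, ∀ x ∈ P,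
      eval (u + w + x) f = L x ^ q + c * L x + eval (u + w) f := by
  obtain ⟨L, ⟨x₀, hx₀, hLx₀⟩, hL, -⟩ := H.exists_dual_polarForm hu
  obtain ⟨x₁, hx₁, hLx₁, l, hlx₀, hlx₁⟩ := H.exists_independent_of_dual hx₀ hLx₀
  obtain ⟨e, he⟩ := H.exists_polarForm_eq_pow l
  refine ⟨L, ⟨x₀, hx₀, hLx₀⟩, (restrictLine e x₁ f).coeff 1, fun w hw x hx => ?_⟩
  have hpolar (x) (hx : x ∈ P) : polarForm f x (u + w) = L x ^ q := by
    rw [map_add, hL x hx, H.polarForm_eq_zero hw hx, add_zero]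
  have hpolar₀ : polarForm f x₀ (u + w) = 1 := by rw [hpolar x₀ hx₀, hLx₀, one_pow]
  have hcoeff (k : ℕ) (hk : k ≠ 0) (hkq : k < q) :=
    H.coeff_restrictLine_eq_ite hx₀ hx₁ hpolar₀ (by rw [hpolar x₁ hx₁, hLx₁, zero_pow H.ne_zero])
      (by rw [he x₀ hx₀, hlx₀, zero_pow H.ne_zero]) (by rw [he x₁ hx₁, hlx₁, one_pow]) hk hkq
  rw [H.eval_add_eq hx hx₀ hpolar₀ fun k hk hkq => by
    rw [hcoeff k (by omega) hkq, if_neg (by omega)], hpolar x hx, H.pow_pow,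
    hcoeff 1 one_ne_zero (one_lt_two.trans H.two_lt), if_pos rfl]

theorem eval_smul_add_add_eq_of_ne_zero {u : σ → F} {L : Dual F (σ → F)} {c : F}
    (hf : ∀ w ∈ W, ∀ x ∈ P, eval (u + w + x) f = L x ^ q + c * L x + eval (u + w) f)
    {w x : σ → F} (hw : w ∈ W) (hx : x ∈ P) {s : F} (hs : s ≠ 0) :
    eval (s • u + w + x) f = s * L x ^ q + c * (s ^ q * L x) + eval (s • u + w) f := by
  have h := hf (s⁻¹ • w) (W.smul_mem _ hw) (s⁻¹ • x) (P.smul_mem _ hx)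
  have h1 : s • u + w = s • (u + s⁻¹ • w) := by rw [smul_add, smul_inv_smul₀ hs]
  have h2 : s • u + w + x = s • (u + s⁻¹ • w + s⁻¹ • x) := by
    rw [smul_add, smul_inv_smul₀ hs, ← h1]
  rw [h2, h1, eval_smul_of_isHomogeneous H.isHomogeneous,
    eval_smul_of_isHomogeneous H.isHomogeneous, h, map_smul, smul_eq_mul, mul_pow, inv_pow]
  field_simp
  ring

theorem eval_smul_add_add_eq {u : σ → F} {L : Dual F (σ → F)} {c : F}
    (hf : ∀ w ∈ W, ∀ x ∈ P, eval (u + w + x) f = L x ^ q + c * L x + eval (u + w) f)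
    {w x : σ → F} (hw : w ∈ W) (hx : x ∈ P) (s : F) :
    eval (s • u + w + x) f = s * L x ^ q + c * (s ^ q * L x) + eval (s • u + w) f := by
  -- Both sides are polynomials in `s` of degree at most `q + 1` that agree for `s ≠ 0`.
  let p := restrictLine (w + x) u f - (Polynomial.C (L x ^ q) * Polynomial.X ^ 1 +
    Polynomial.C (c * L x) * Polynomial.X ^ q + restrictLine w u f)
  have heval (s : F) : p.eval s =
      eval (s • u + w + x) f - (s * L x ^ q + c * (s ^ q * L x) + eval (s • u + w) f) := by
    simp only [p, Polynomial.eval_sub, Polynomial.eval_add, Polynomial.eval_mul, Polynomial.eval_C,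
      Polynomial.eval_pow, Polynomial.eval_X, eval_restrictLine]
    rw [show w + x + s • u = s • u + w + x by abel, add_comm w (s • u)]
    ring
  have hp : p = 0 := by
    classical
    refine Polynomial.eq_zero_of_natDegree_lt_card_of_eval_eq_zero' p (Finset.univ.erase 0)
      (fun s hs => by rw [heval, H.eval_smul_add_add_eq_of_ne_zero hf hw hx
        (Finset.ne_of_mem_erase hs), sub_self]) ?_
    have hline (a b : σ → F) : (restrictLine a b f).natDegree ≤ q + 1 :=
      (_root_.natDegree_restrictLine_le a b f).trans H.isHomogeneous.totalDegree_le
    have hmonomial (a : F) {k : ℕ} (hk : k ≤ q) :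
        (Polynomial.C a * Polynomial.X ^ k).natDegree ≤ q + 1 :=
      (Polynomial.natDegree_C_mul_X_pow_le a k).trans (hk.trans q.le_succ)
    have hdeg : p.natDegree ≤ q + 1 :=
      (Polynomial.natDegree_sub_le_of_le (hline _ _) (Polynomial.natDegree_add_le_of_degree_le
        (Polynomial.natDegree_add_le_of_degree_le
          (hmonomial _ (Nat.one_le_iff_ne_zero.mpr H.ne_zero)) (hmonomial _ le_rfl))
        (hline _ _))).trans (max_self _).le
    rw [Finset.card_erase_of_mem (Finset.mem_univ _), Finset.card_univ, H.card_eq]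
    have := H.two_lt
    have : q + 2 < q ^ 2 := by nlinarith
    omega
  exact sub_eq_zero.mp (by rw [← heval, hp, Polynomial.eval_zero])

end IsHermitianFlag

section ConjugatePolynomial

variable {F : Type*} [Field F] {q : ℕ} {d : F} {l : Polynomial F}

/-- The polynomial of degree less than `q ^ 2` that represents the function `t ↦ l(t) ^ q` on the
field with `q ^ 2` elements when `l` has degree at most `q + 1`: as `t ^ (q ^ 2) = t`, the terms
of degree `q` and `q + 1` of `l` contribute terms of degree `1` and `q + 1`. -/
noncomputable def conjPolynomial (q : ℕ) (l : Polynomial F) : Polynomial F :=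
  Polynomial.expand F q (∑ i ∈ Finset.range q, Polynomial.monomial i (l.coeff i ^ q)) +
    Polynomial.monomial 1 (l.coeff q ^ q) + Polynomial.monomial (q + 1) (l.coeff (q + 1) ^ q)

theorem natDegree_conjPolynomial_lt (hq : 2 < q) : (conjPolynomial q l).natDegree < q ^ 2 := by
  have hsum : (∑ i ∈ Finset.range q, Polynomial.monomial i (l.coeff i ^ q)).natDegree ≤ q - 1 :=
    Polynomial.natDegree_sum_le_of_forall_le _ _ fun i hi =>
      (Polynomial.natDegree_monomial_le _).trans (by rw [Finset.mem_range] at hi; omega)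
  have hexpand := Nat.mul_le_mul_right q hsum
  rw [← Polynomial.natDegree_expand q] at hexpand
  have hdeg : (conjPolynomial q l).natDegree ≤ max (max ((q - 1) * q) 1) (q + 1) :=
    (Polynomial.natDegree_add_le _ _).trans (max_le_max ((Polynomial.natDegree_add_le _ _).trans
      (max_le_max hexpand (Polynomial.natDegree_monomial_le _)))
        (Polynomial.natDegree_monomial_le _))
  refine hdeg.trans_lt (max_lt (max_lt ?_ ?_) ?_)
  · rw [sq]
    exact Nat.mul_lt_mul_of_pos_right (by omega) (by omega)
  all_goals nlinarith

theorem eval_conjPolynomial [Fintype F] (hF : Fintype.card F = q ^ 2) (hl : l.natDegree ≤ q + 1)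
    (t : F) : (conjPolynomial q l).eval t = l.eval t ^ q := by
  let conj : F →+ F := AddMonoidHom.mk' (· ^ q) (add_pow_of_card_eq_pow hF)
  have hconj (k : ℕ) : conj (l.coeff k * t ^ k) = l.coeff k ^ q * (t ^ q) ^ k := by
    simp only [conj, AddMonoidHom.mk'_apply, mul_pow, ← pow_mul, mul_comm]
  calc (conjPolynomial q l).eval t
      = ∑ k ∈ Finset.range (q + 2), conj (l.coeff k * t ^ k) := by
        simp only [conjPolynomial, Polynomial.eval_add, Polynomial.expand_eval,
          Polynomial.eval_finsetSum, Polynomial.eval_monomial, hconj, Finset.sum_range_succ,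
          pow_succ (t ^ q) q, pow_pow_eq_self_of_card_eq_sq hF]
        ring
    _ = l.eval t ^ q := by
        rw [← map_sum, ← Polynomial.eval_eq_sum_range' (Nat.lt_succ_of_le hl)]
        rfl

theorem coeff_conjPolynomial (hq : q ≠ 0) (k : ℕ) :
    (conjPolynomial q l).coeff k =
      (if q ∣ k then if k / q < q then l.coeff (k / q) ^ q else 0 else 0) +
        (if 1 = k then l.coeff q ^ q else 0) +
        if q + 1 = k then l.coeff (q + 1) ^ q else 0 := by
  simp only [conjPolynomial, Polynomial.coeff_add, Polynomial.coeff_expand (Nat.pos_of_ne_zero hq),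
    Polynomial.finsetSum_coeff, Polynomial.coeff_monomial, Finset.sum_ite_eq', Finset.mem_range]

theorem coeff_of_forall_eval_pow_eq [Fintype F] (hq : 2 < q) (hF : Fintype.card F = q ^ 2)
    (hdeg : l.natDegree ≤ q + 1) (hl : ∀ t, l.eval t ^ q = d * l.eval t) :
    l.coeff 0 ^ q = d * l.coeff 0 ∧ l.coeff q ^ q = d * l.coeff 1 ∧
      l.coeff 1 ^ q = d * l.coeff q ∧ l.coeff (q + 1) ^ q = d * l.coeff (q + 1) ∧
      ∀ k, 2 ≤ k → k < q → d * l.coeff k = 0 := by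
  have hconj : conjPolynomial q l = Polynomial.C d * l := by
    refine Polynomial.eq_of_natDegree_lt_card_of_eval_eq _ _ Function.injective_id (fun t => ?_) ?_
    · simp [eval_conjPolynomial hF hdeg, hl]
    · rw [hF]
      refine max_lt (natDegree_conjPolynomial_lt hq) ?_
      have := (Polynomial.natDegree_C_mul_le d l).trans hdeg
      nlinarith
  have hcoeff (k : ℕ) := (coeff_conjPolynomial (l := l) (by omega : q ≠ 0) k).symm.trans
    ((congrArg (Polynomial.coeff · k) hconj).trans (Polynomial.coeff_C_mul l))
  have hq1 : ¬ q ∣ 1 := fun h => by have := Nat.le_of_dvd one_pos h; omega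
  have hq2 : ¬ q ∣ q + 1 := fun h => hq1 ((Nat.dvd_add_right dvd_rfl).mp h)
  refine ⟨?_, ?_, ?_, ?_, fun k hk hkq => ?_⟩
  · simpa [show 0 < q by omega] using hcoeff 0
  · simpa [hq1, show q ≠ 0 by omega] using hcoeff 1
  · simpa [show 0 < q by omega, show 1 < q by omega, show 1 ≠ q by omega] using hcoeff q
  · simpa [hq2, show q ≠ 0 by omega] using hcoeff (q + 1)
  · simpa [Nat.not_dvd_of_pos_of_lt (by omega : 0 < k) hkq, show 1 ≠ k by omega,
      show q + 1 ≠ k by omega] using (hcoeff k).symm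

end ConjugatePolynomial

namespace IsHermitianFlag

variable {F σ : Type*} [Field F] [Fintype F] [Fintype σ] {q : ℕ} {f : MvPolynomial σ F}
  {P W : Submodule F (σ → F)} (H : IsHermitianFlag q f P W)

include H

theorem exists_eval_add_eq_zero_and_ne {a : σ → F} (ha : a ∉ W) {L : Dual F (σ → F)} {x₀ : σ → F}
    (hx₀ : x₀ ∈ P) (hL : L x₀ = 1) :
    ∃ x ∈ P, ∃ y ∈ P, eval (a + x) f = 0 ∧ eval (a + y) f = 0 ∧ L x ≠ L y := by
  obtain ⟨k, M, -, hM⟩ := H.exists_parametrization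
  have hMP (y) : M y ∈ P := hM ▸ LinearMap.mem_range_self M y
  obtain ⟨y₀, rfl⟩ := hM ▸ hx₀
  by_contra! hconst
  -- If `L` were constant on the zeros, they could be translated along `y₀` without overlap.
  let Z := {y | eval y (restrictAffine a M f) = 0}
  have hinjOn : Set.InjOn (fun z : (Fin (k + 1) → F) × F => z.1 + z.2 • y₀) (Z ×ˢ Set.univ) := by
    rintro ⟨y, s⟩ ⟨hy, -⟩ ⟨z, t⟩ ⟨hz, -⟩ (hyz : y + s • y₀ = z + t • y₀)
    rw [Set.mem_ofPred_eq, eval_restrictAffine] at hy hz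
    have hst := congrArg (L ∘ₗ M) hyz
    simp only [map_add, map_smul, LinearMap.comp_apply, hL, smul_eq_mul, mul_one,
      hconst _ (hMP y) _ (hMP z) hy hz, add_right_inj] at hst
    rw [hst, add_left_inj] at hyz
    rw [hyz, hst]
  have hcard := Set.ncard_le_ncard_of_injOn (t := Set.univ) _ (fun _ _ => Set.mem_univ _) hinjOn
  rw [Set.ncard_prod, H.ncard_zeros_restrictAffine hM ha, Set.ncard_univ, Set.ncard_univ,
    Nat.card_eq_fintype_card, Nat.card_eq_fintype_card, Fintype.card_pi_const, pow_succ] at hcard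
  have hpos : 0 < Fintype.card F ^ k * Fintype.card F := by
    have := H.add_one_lt_card
    positivity
  nlinarith [H.two_lt]

section Coset

variable {u : σ → F} {L : Dual F (σ → F)} {c : F}
  (hf : ∀ w ∈ W, ∀ x ∈ P, eval (u + w + x) f = L x ^ q + c * L x + eval (u + w) f)

include hf

theorem mul_pow_eq_one (hu : u ∉ W) {x₀ : σ → F} (hx₀ : x₀ ∈ P) (hL : L x₀ = 1) :
    c * c ^ q = 1 := by
  obtain ⟨x, hx, y, hy, hfx, hfy, hxy⟩ := H.exists_eval_add_eq_zero_and_ne hu hx₀ hL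
  have hdiff : L (x - y) ^ q + c * L (x - y) = 0 := by
    have hadd := H.add_pow (L (x - y)) (L y)
    rw [← map_add, sub_add_cancel] at hadd
    have h := hf 0 W.zero_mem
    simp only [add_zero] at h
    rw [h x hx] at hfx
    rw [h y hy] at hfy
    rw [map_sub] at hadd ⊢
    linear_combination hfx - hfy - hadd
  have hconj := congrArg (· ^ q) hdiff
  simp only [H.add_pow, mul_pow, H.pow_pow, zero_pow H.ne_zero] at hconj
  refine mul_left_cancel₀ (sub_ne_zero.mpr hxy) ?_
  rw [← map_sub]
  linear_combination c ^ q * hdiff - hconj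

theorem eval_add_pow_eq (hu : u ∉ W) (hc : c * c ^ q = 1) {w : σ → F} (hw : w ∈ W) :
    eval (u + w) f ^ q = c ^ q * eval (u + w) f := by
  obtain ⟨k, M, -, hM⟩ := H.exists_parametrization
  have huw : u + w ∉ W := (Submodule.add_mem_iff_left W hw).not.mpr hu
  obtain ⟨y, hy⟩ : {y | eval y (restrictAffine (u + w) M f) = 0}.Nonempty := by
    rw [← Set.ncard_pos, H.ncard_zeros_restrictAffine hM huw]
    have := H.two_lt
    have := H.add_one_lt_card
    positivity
  rw [Set.mem_ofPred_eq, eval_restrictAffine, hf w hw _ (hM ▸ LinearMap.mem_range_self M y)] at hy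
  have hconj := congrArg (· ^ q) hy
  simp only [H.add_pow, mul_pow, H.pow_pow, zero_pow H.ne_zero] at hconj
  linear_combination hconj - c ^ q * hy + L (M y) * hc

end Coset

end IsHermitianFlag

section HermitianForm

variable {ι F : Type} [Fintype ι] [Field F] {q : ℕ} {N : Matrix ι ι F}

theorem isHermitianForm_dotProduct_mulVec [Fintype F] {V : Type} [AddCommGroup V] [Module F V]
    (hF : Fintype.card F = q ^ 2) (hN : ∀ i j, N j i = N i j ^ q) (Φ : V →ₗ[F] ι → F) :
    IsHermitianForm q fun v w => Φ v ⬝ᵥ N.mulVec (Φ w ^ q) := by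
  have hadd (x y : ι → F) : (x + y) ^ q = x ^ q + y ^ q :=
    funext fun i => add_pow_of_card_eq_pow hF (x i) (y i)
  let conj : F →+ F := AddMonoidHom.mk' (· ^ q) (add_pow_of_card_eq_pow hF)
  have hterm (x y : F) (i j : ι) : y * (N j i * x ^ q) = conj (x * (N i j * y ^ q)) := by
    simp only [conj, AddMonoidHom.mk'_apply, mul_pow, pow_pow_eq_self_of_card_eq_sq hF, hN i j]
    ring
  refine ⟨fun u v w => by simp only [map_add, add_dotProduct],
    fun u v w => by simp only [map_add, hadd, Matrix.mulVec_add, dotProduct_add],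
    fun a v w => by simp only [map_smul, smul_dotProduct, smul_eq_mul], fun v w => ?_⟩
  calc Φ w ⬝ᵥ N.mulVec (Φ v ^ q)
      = ∑ j, ∑ i, conj (Φ v i * (N i j * Φ w j ^ q)) := by
        simp only [dotProduct, Matrix.mulVec, Pi.pow_apply, Finset.mul_sum]
        exact Finset.sum_congr rfl fun j _ => Finset.sum_congr rfl fun i _ => hterm _ _ i j
    _ = conj (Φ v ⬝ᵥ N.mulVec (Φ w ^ q)) := by
        simp only [dotProduct, Matrix.mulVec, Pi.pow_apply, Finset.mul_sum, map_sum]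
        exact Finset.sum_comm

theorem hasRadicalDimOn_dotProduct_mulVec [DecidableEq ι] {n k : ℕ} (hq : q ≠ 0) (hN : N.det ≠ 0)
    {Φ : (Fin n → F) →ₗ[F] ι → F} {U : Submodule F (Fin n → F)} (hΦ : U.map Φ = ⊤)
    (hk : finrank F U = k + Fintype.card ι) :
    HasRadicalDimOn (fun v w => Φ v ⬝ᵥ N.mulVec (Φ w ^ q)) U k := by
  refine ⟨(LinearMap.ker (Φ.domRestrict U)).map U.subtype, Submodule.map_subtype_le _ _, ?_,
    fun v hv => ?_⟩
  · have hrank := (Φ.domRestrict U).finrank_range_add_finrank_ker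
    rw [LinearMap.range_domRestrict, hΦ, finrank_top, finrank_fintype_fun_eq_card, hk] at hrank
    rw [Submodule.finrank_map_subtype_eq]
    omega
  · have hmem : v ∈ (LinearMap.ker (Φ.domRestrict U)).map U.subtype ↔ Φ v = 0 := by
      simp [hv]
    rw [hmem]
    refine ⟨fun h w _ => by simp only [h, zero_dotProduct], fun h => ?_⟩
    refine Matrix.eq_zero_of_vecMul_eq_zero hN (funext fun j => ?_)
    obtain ⟨w, hw, hΦw⟩ : Pi.single j 1 ∈ U.map Φ := hΦ ▸ Submodule.mem_top
    have hpow : (Pi.single j 1 : ι → F) ^ q = Pi.single j 1 := by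
      ext i
      simp [Pi.single_apply, hq]
    simpa only [hΦw, hpow, Matrix.dotProduct_mulVec, dotProduct_single_one,
      Pi.zero_apply] using h w hw

theorem isHermitianConeOn_of_eval_eq {n k : ℕ} {f : MvPolynomial (Fin n) F}
    {U : Submodule F (Fin n → F)} {η : (Fin n → F) → (Fin n → F) → F} (hη : IsHermitianForm q η)
    (hrad : HasRadicalDimOn η U k) {r : F} (hr : r ≠ 0) (hf : ∀ v ∈ U, eval v f = r * η v v) :
    IsHermitianConeOn q U k (hypersurfacePts f ∩ projPts U) := by
  refine ⟨η, hη, hrad, Set.ext fun p => ?_⟩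
  rw [Set.inter_comm]
  refine and_congr_right fun hp => ?_
  have hrep : p.rep ∈ U := hp (p.submodule_eq ▸ Submodule.mem_span_singleton_self p.rep)
  rw [hypersurfacePts, Set.mem_ofPred_eq, hf _ hrep, mul_eq_zero, or_iff_right hr]

end HermitianForm

section Hyperplane

variable {F V : Type*} [Field F] [AddCommGroup V] [Module F V] [FiniteDimensional F V]

theorem exists_dual_sub_smul_mem {p U : Submodule F V} (hpU : p ≤ U)
    (hU : finrank F U = finrank F p + 1) {u : V} (huU : u ∈ U) (hup : u ∉ p) :
    ∃ A : Dual F V, A u = 1 ∧ (∀ w ∈ p, A w = 0) ∧ ∀ v ∈ U, v - A v • u ∈ p := by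
  obtain ⟨A, hAu, hAp⟩ := Submodule.exists_le_ker_of_notMem hup
  have hAp' (w) (hw : w ∈ p) : A w = 0 := hAp hw
  refine ⟨(A u)⁻¹ • A, by simp [hAu], fun w hw => by simp [hAp' w hw], fun v hv => ?_⟩
  have hsup : p ⊔ F ∙ u = U :=
    Submodule.eq_of_le_of_finrank_eq
      (sup_le hpU ((Submodule.span_singleton_le_iff_mem _ _).mpr huU))
      (by rw [Submodule.finrank_sup_span_singleton hup, hU])
  rw [← hsup] at hv
  obtain ⟨w, hw, y, hy, rfl⟩ := Submodule.mem_sup.mp hv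
  obtain ⟨t, rfl⟩ := Submodule.mem_span_singleton.mp hy
  simpa [hAp' w hw, mul_left_comm _ t, inv_mul_cancel₀ hAu] using hw

end Hyperplane

section ConeMatrix

variable {F : Type*} [Field F] [Fintype F] {q : ℕ}

theorem exists_hermitian_matrix (hF : Fintype.card F = q ^ 2) {c g₀ g₁ g₂ γ : F}
    (hc : c * c ^ q = 1) (hγ : γ ≠ 0) (hγq : γ ^ q = c ^ q * γ) (hg₀ : g₀ ^ q = c ^ q * g₀)
    (hg₁ : g₁ ^ q = c ^ q * g₂) (hg₂ : g₂ ^ q = c ^ q * g₁) :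
    ∃ N : Matrix (Fin 3) (Fin 3) F, (∀ i j, N j i = N i j ^ q) ∧ N.det ≠ 0 ∧
      ∀ x : Fin 3 → F, γ * (x ⬝ᵥ N.mulVec (x ^ q)) =
        x 0 * x 2 ^ q + c * (x 0 ^ q * x 2) + (g₀ * x 0 ^ (q + 1) + g₁ * (x 0 ^ q * x 1) +
          g₂ * (x 0 * x 1 ^ q) + γ * x 1 ^ (q + 1)) := by
  have hc0 : c ≠ 0 := left_ne_zero_of_mul_eq_one hc
  have hq : q ≠ 0 := by
    rintro rfl
    exact Fintype.card_ne_zero (hF.trans (zero_pow two_ne_zero))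
  have hγ' : c ^ q = c⁻¹ := eq_inv_of_mul_eq_one_right hc
  have hcq : c⁻¹ ^ q = c := by rw [← hγ', pow_pow_eq_self_of_card_eq_sq hF]
  refine ⟨!![g₀ / γ, g₂ / γ, 1 / γ; g₁ / γ, 1, 0; c / γ, 0, 0], fun i j => ?_, ?_, fun x => ?_⟩
  · rw [hγ'] at hγq hg₀ hg₁ hg₂
    fin_cases i <;> fin_cases j <;>
      simp [div_pow, hγq, hg₀, hg₁, hg₂, hγ', hq] <;> field_simp
  · simp [Matrix.det_fin_three, hc0, hγ]
  · simp only [dotProduct, Matrix.mulVec, Fin.sum_univ_three, Pi.pow_apply, Matrix.of_apply,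
      Matrix.cons_val]
    field_simp
    ring

end ConeMatrix

namespace IsHermitianFlag

section Coordinates

variable {F σ : Type*} [Field F] [Fintype F] [Fintype σ] {q : ℕ} {f : MvPolynomial σ F}
  {P W : Submodule F (σ → F)} (H : IsHermitianFlag q f P W)

include H

theorem exists_coordinates {U : Submodule F (σ → F)} (hWU : W ≤ U)
    (hU : finrank F U = finrank F W + 1) {u e x₀ : σ → F} (huU : u ∈ U) (hu : u ∉ W) (heW : e ∈ W)
    (he : e ∉ P) (hx₀ : x₀ ∈ P) {L : Dual F (σ → F)} (hL : L x₀ = 1) :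
    ∃ Φ : (σ → F) →ₗ[F] Fin 3 → F, U.map Φ = ⊤ ∧ ∀ v ∈ U, ∃ x ∈ P,
      v = Φ v 0 • u + Φ v 1 • e + x ∧ L x = Φ v 2 := by
  obtain ⟨A, hAu, hAW, hA⟩ := exists_dual_sub_smul_mem hWU hU huU hu
  obtain ⟨B, hBe, hBP, hB⟩ := exists_dual_sub_smul_mem H.le H.finrank_eq heW he
  let πW := LinearMap.id - A.smulRight u
  let πP := LinearMap.id - B.smulRight e
  refine ⟨LinearMap.pi ![A, B ∘ₗ πW, L ∘ₗ πP ∘ₗ πW], ?_, fun v hv =>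
    ⟨πP (πW v), hB _ (hA v hv), ?_, by simp⟩⟩
  · refine Submodule.eq_top_iff'.mpr fun y => ⟨y 0 • u + y 1 • e + y 2 • x₀, ?_, ?_⟩
    · exact U.add_mem (U.add_mem (U.smul_mem _ huU) (U.smul_mem _ (hWU heW)))
        (U.smul_mem _ (hWU (H.le hx₀)))
    · ext i
      fin_cases i <;>
        simp [πW, πP, hAu, hAW _ heW, hAW _ (H.le hx₀), hBe, hBP _ hx₀, hL]
      ring
  · simp only [LinearMap.pi_apply, Matrix.cons_val, LinearMap.comp_apply, πP, πW,
      LinearMap.sub_apply, LinearMap.id_apply, LinearMap.smulRight_apply]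
    abel

section Coset

variable {u : σ → F} {L : Dual F (σ → F)} {c : F}
  (hf : ∀ w ∈ W, ∀ x ∈ P, eval (u + w + x) f = L x ^ q + c * L x + eval (u + w) f)

include hf

theorem exists_eval_smul_add_smul_eq (hu : u ∉ W) (hc : c * c ^ q = 1) {e : σ → F} (he : e ∈ W) :
    ∃ g₀ g₁ g₂ : F, g₀ ^ q = c ^ q * g₀ ∧ g₁ ^ q = c ^ q * g₂ ∧ g₂ ^ q = c ^ q * g₁ ∧
      eval e f ^ q = c ^ q * eval e f ∧ ∀ s t : F, eval (s • u + t • e) f =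
        g₀ * s ^ (q + 1) + g₁ * (s ^ q * t) + g₂ * (s * t ^ q) + eval e f * t ^ (q + 1) := by
  let l := restrictLine u e f
  have hdeg : l.natDegree ≤ q + 1 :=
    (_root_.natDegree_restrictLine_le u e f).trans H.isHomogeneous.totalDegree_le
  obtain ⟨h₀, h₂, h₁, hγ, hmiddle⟩ := coeff_of_forall_eval_pow_eq H.two_lt H.card_eq hdeg
    fun t => by rw [eval_restrictLine, H.eval_add_pow_eq hf hu hc (W.smul_mem t he)]
  have hlead : l.coeff (q + 1) = eval e f := coeff_restrictLine_of_isHomogeneous H.isHomogeneous u e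
  rw [hlead] at hγ
  refine ⟨l.coeff 0, l.coeff 1, l.coeff q, h₀, h₁, h₂, hγ, fun s t => ?_⟩
  rcases eq_or_ne s 0 with rfl | hs
  · simp [eval_smul_of_isHomogeneous H.isHomogeneous, H.ne_zero, mul_comm]
  · have hline := eval_eq_of_forall_coeff_eq_zero H.two_lt.le hdeg (fun k hk hkq =>
      (mul_eq_zero_iff_left (right_ne_zero_of_mul_eq_one hc)).mp (hmiddle k hk hkq)) (s⁻¹ * t)
    have hsmul : s • u + t • e = s • (u + (s⁻¹ * t) • e) := by
      rw [smul_add, smul_smul, mul_inv_cancel_left₀ hs]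
    rw [hsmul, eval_smul_of_isHomogeneous H.isHomogeneous, ← eval_restrictLine, hline,
      hlead]
    simp only [mul_pow, inv_pow, pow_succ]
    field_simp

end Coset

end Coordinates

theorem isHermitianConeOn {F : Type} [Field F] [Fintype F] {n q : ℕ} {f : MvPolynomial (Fin n) F}
    {P W U : Submodule F (Fin n → F)} (H : IsHermitianFlag q f P W) (hWU : W ≤ U)
    (hU : finrank F U = finrank F W + 1) :
    IsHermitianConeOn q U (finrank F P - 1) (hypersurfacePts f ∩ projPts U) := by
  obtain ⟨u, huU, hu⟩ : ∃ u ∈ U, u ∉ W :=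
    SetLike.exists_of_lt (Submodule.lt_of_le_of_finrank_lt_finrank hWU (by omega))
  obtain ⟨e, heW, he⟩ : ∃ e ∈ W, e ∉ P :=
    SetLike.exists_of_lt (Submodule.lt_of_le_of_finrank_lt_finrank H.le
      (H.finrank_eq ▸ Nat.lt_succ_self _))
  obtain ⟨L, ⟨x₀, hx₀, hL⟩, c, hcoset⟩ := H.exists_eval_add_add_eq hu
  have hc : c * c ^ q = 1 := H.mul_pow_eq_one hcoset hu hx₀ hL
  have hγ : eval e f ≠ 0 := (H.eval_eq_zero_iff e heW).not.mpr he
  obtain ⟨g₀, g₁, g₂, hg₀, hg₁, hg₂, hγq, hg⟩ :=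
    H.exists_eval_smul_add_smul_eq hcoset hu hc heW
  obtain ⟨N, hN, hdet, hNf⟩ := exists_hermitian_matrix H.card_eq hc hγ hγq hg₀ hg₁ hg₂
  obtain ⟨Φ, hΦ, hcoord⟩ := H.exists_coordinates hWU hU huU hu heW he hx₀ hL
  refine isHermitianConeOn_of_eval_eq (isHermitianForm_dotProduct_mulVec H.card_eq hN Φ)
    (hasRadicalDimOn_dotProduct_mulVec H.ne_zero hdet hΦ ?_) hγ fun v hv => ?_
  · have := H.finrank_eq
    have := H.two_le_finrank
    rw [Fintype.card_fin]
    omega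
  · obtain ⟨x, hx, hvx, hLx⟩ := hcoord v hv
    rw [hNf, ← hg, ← hLx, ← H.eval_smul_add_add_eq hcoset (W.smul_mem _ heW) hx, ← hvx]

end IsHermitianFlag

section PointCount

theorem one_add_sq_sub_one_mul_sum_pow {q : ℕ} (hq : q ≠ 0) (m : ℕ) :
    1 + (q ^ 2 - 1) * ∑ i ∈ Finset.range m, q ^ (2 * i) = q ^ (2 * m) := by
  have hsq : q ^ 2 - 1 + 1 = q ^ 2 := Nat.sub_add_cancel (Nat.one_le_pow _ _ (by omega))
  have hgeom := geom_sum_mul_add (q ^ 2 - 1) m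
  rw [hsq] at hgeom
  simp_rw [pow_mul]
  rw [← hgeom, mul_comm, add_comm]

theorem ncard_coe_submodule {F V : Type*} [Field F] [Fintype F] [AddCommGroup V] [Module F V]
    [FiniteDimensional F V] {q : ℕ} (hF : Fintype.card F = q ^ 2) (U : Submodule F V) :
    (U : Set V).ncard = q ^ (2 * finrank F U) := by
  rw [← Nat.card_coe_set_eq, SetLike.coe_sort_coe, natCard_eq_pow_finrank (K := F),
    Nat.card_eq_fintype_card, hF, pow_mul]

end PointCount

namespace IsHermitianFlag

section Diff

variable {F σ : Type*} [Field F] [Fintype F] [Fintype σ] {q : ℕ} {f : MvPolynomial σ F}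
  {P W : Submodule F (σ → F)} (H : IsHermitianFlag q f P W)

include H

theorem inter_zeros_eq : ↑W ∩ {v | eval v f = 0} = (P : Set (σ → F)) :=
  Set.ext fun v => ⟨fun hv => (H.eval_eq_zero_iff v hv.1).mp hv.2,
    fun hv => ⟨H.le hv, H.eval_eq_zero hv⟩⟩

theorem mul_ncard_diff_inter_zeros (U : Submodule F (σ → F)) (hWU : W ≤ U) :
    q * ((↑U \ ↑W) ∩ {v | eval v f = 0}).ncard = ((U : Set (σ → F)) \ W).ncard := by
  obtain ⟨k, M, -, hM⟩ := H.exists_parametrization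
  have hMW (x) : M x ∈ W := H.le (hM ▸ LinearMap.mem_range_self M x)
  have hcount := ncard_mul_eq_of_forall_ncard_eq (S := (U : Set (σ → F)) \ W) (m := M)
    (Z := {v | eval v f = 0}) (N := q * Fintype.card F ^ k)
    (fun a x => and_congr (Submodule.add_mem_iff_left U (hWU (hMW x)))
      (Submodule.add_mem_iff_left W (hMW x)).not)
    (fun a ha => by
      simpa only [eval_restrictAffine, Set.mem_ofPred_eq] using
        H.ncard_zeros_restrictAffine hM ha.2)
  rw [Fintype.card_pi_const, pow_succ, H.card_eq] at hcount
  have hpos : 0 < q * (q ^ 2) ^ k := by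
    have := H.two_lt
    positivity
  refine Nat.eq_of_mul_eq_mul_right hpos ?_
  rw [hcount]
  ring

end Diff

theorem ncard_hypersurfacePts_inter {F : Type} [Field F] [Fintype F] {n q : ℕ}
    {f : MvPolynomial (Fin n) F} {P W U : Submodule F (Fin n → F)} (H : IsHermitianFlag q f P W)
    (hWU : W ≤ U) (hU : finrank F U = finrank F W + 1) :
    (hypersurfacePts f ∩ projPts U).ncard =
      q ^ (2 * finrank F P + 1) + ∑ i ∈ Finset.range (finrank F P), q ^ (2 * i) := by
  have hpoints := ncard_zeros_inter_eq q.succ_ne_zero H.isHomogeneous U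
  rw [Nat.card_eq_fintype_card, H.card_eq] at hpoints
  have hsplit := Set.ncard_inter_add_ncard_sdiff_eq_ncard (↑U ∩ {v | eval v f = 0}) W
  rw [Set.inter_right_comm, Set.inter_eq_self_of_subset_right hWU, H.inter_zeros_eq,
    Set.inter_sdiff_right_comm, ncard_coe_submodule H.card_eq, hpoints] at hsplit
  have hdiff := Set.ncard_sdiff_add_ncard_of_subset hWU
  rw [← H.mul_ncard_diff_inter_zeros U hWU, ncard_coe_submodule H.card_eq,
    ncard_coe_submodule H.card_eq, hU, H.finrank_eq] at hdiff
  have hsum := one_add_sq_sub_one_mul_sum_pow H.ne_zero (finrank F P)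
  obtain ⟨s, hs⟩ : ∃ s, q ^ 2 = s + 1 :=
    Nat.exists_eq_add_of_le' (Nat.one_le_pow _ _ (Nat.pos_of_ne_zero H.ne_zero))
  have hs0 : 0 < s := by nlinarith [H.two_lt]
  rw [hs, Nat.add_sub_cancel] at hsplit hsum
  have hcompl : ((↑U \ ↑W) ∩ {v | eval v f = 0}).ncard = s * q ^ (2 * finrank F P + 1) := by
    refine Nat.eq_of_mul_eq_mul_left (Nat.pos_of_ne_zero H.ne_zero) (Nat.add_right_cancel
      (hdiff.trans ?_))
    linear_combination q ^ (2 * finrank F P + 2) * hs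
  refine Nat.eq_of_mul_eq_mul_left hs0 ?_
  linarith

end IsHermitianFlag

section HermitianCount

variable {F : Type} [Field F] [Fintype F] {n m q : ℕ} {f : MvPolynomial (Fin n) F}
  {W : Submodule F (Fin n → F)}

theorem ncard_inter_zeros_eq_pow (hq : q ≠ 0) (hF : Fintype.card F = q ^ 2)
    (hf : f.IsHomogeneous (q + 1))
    (hint : (hypersurfacePts f ∩ projPts W).ncard = ∑ i ∈ Finset.range m, q ^ (2 * i)) :
    (↑W ∩ {v | eval v f = 0}).ncard = q ^ (2 * m) := by
  rw [ncard_zeros_inter_eq q.succ_ne_zero hf W, hint, Nat.card_eq_fintype_card, hF,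
    one_add_sq_sub_one_mul_sum_pow hq]

theorem mul_ncard_compl_inter_zeros (hq : q ≠ 0) (hn : n = 2 * m + 1) (hF : Fintype.card F = q ^ 2)
    (hf : f.IsHomogeneous (q + 1))
    (hcard : (hypersurfacePts f).ncard =
      (q ^ (2 * m + 1) + 1) * ∑ i ∈ Finset.range m, q ^ (2 * i))
    (hW : finrank F W = m + 1)
    (hint : (hypersurfacePts f ∩ projPts W).ncard = ∑ i ∈ Finset.range m, q ^ (2 * i)) :
    q * ((W : Set (Fin n → F))ᶜ ∩ {v | eval v f = 0}).ncard = (W : Set (Fin n → F))ᶜ.ncard := by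
  have htop : projPts (⊤ : Submodule F (Fin n → F)) = Set.univ :=
    Set.eq_univ_of_forall fun p => show p.submodule ≤ ⊤ from le_top
  have hsum := one_add_sq_sub_one_mul_sum_pow hq m
  have hzeros := ncard_zeros_inter_eq q.succ_ne_zero hf ⊤
  rw [htop, Set.inter_univ, hcard, Nat.card_eq_fintype_card, hF, Submodule.top_coe,
    Set.univ_inter, Nat.mul_left_comm] at hzeros
  have hsplit := Set.ncard_inter_add_ncard_sdiff_eq_ncard {v | eval v f = 0} (W : Set (Fin n → F))
  rw [Set.inter_comm, ncard_inter_zeros_eq_pow hq hF hf hint, hzeros, Set.sdiff_eq, Set.inter_comm,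
    ← hsum] at hsplit
  have hcompl := Set.ncard_add_ncard_compl (W : Set (Fin n → F))
  have hspace : Nat.card (Fin n → F) = q ^ (2 * (2 * m + 1)) := by
    rw [Nat.card_eq_fintype_card, Fintype.card_pi_const, hF, ← pow_mul, hn]
  rw [ncard_coe_submodule hF, hW, hspace] at hcompl
  have hzeros_compl : ((W : Set (Fin n → F))ᶜ ∩ {v | eval v f = 0}).ncard =
      q ^ (2 * m + 1) * ((q ^ 2 - 1) * ∑ i ∈ Finset.range m, q ^ (2 * i)) := by
    linarith
  rw [hzeros_compl]
  refine Nat.add_left_cancel (Eq.trans ?_ hcompl.symm)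
  generalize (q ^ 2 - 1) * ∑ i ∈ Finset.range m, q ^ (2 * i) = T at hsum
  linear_combination q ^ (2 * m + 2) * hsum

theorem exists_isHermitianFlag (hm : 2 ≤ m) (hq : 2 < q) (hn : n = 2 * m + 1)
    (hF : Fintype.card F = q ^ 2) (hf : f.IsHomogeneous (q + 1))
    (hsub : ¬ ∃ U : Submodule F (Fin n → F),
      finrank F U = m + 1 ∧ projPts U ⊆ hypersurfacePts f)
    (hcard : (hypersurfacePts f).ncard =
      (q ^ (2 * m + 1) + 1) * ∑ i ∈ Finset.range m, q ^ (2 * i))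
    (hW : finrank F W = m + 1)
    (hint : (hypersurfacePts f ∩ projPts W).ncard = ∑ i ∈ Finset.range m, q ^ (2 * i)) :
    ∃ P : Submodule F (Fin n → F), finrank F P = m ∧ IsHermitianFlag q f P W := by
  have hq0 : q ≠ 0 := by omega
  have hzeros := ncard_inter_zeros_eq_pow hq0 hF hf hint
  have hcompl := mul_ncard_compl_inter_zeros hq0 hn hF hf hcard hW hint
  have hne_top : W ≠ ⊤ := by
    rintro rfl
    rw [finrank_top, finrank_fin_fun] at hW
    omega
  obtain ⟨P, hPW, hP⟩ := exists_le_forall_eval_eq_zero_iff hq hF hf hne_top hcompl.ge (by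
    rw [hzeros, ← SetLike.coe_sort_coe, Nat.card_coe_set_eq, ncard_coe_submodule hF, hW, hF,
      ← pow_add, mul_add])
  have hWP : ↑W ∩ {v | eval v f = 0} = (P : Set (Fin n → F)) :=
    Set.ext fun v => ⟨fun hv => (hP v hv.1).mp hv.2, fun hv => ⟨hPW hv, (hP v (hPW hv)).mpr hv⟩⟩
  rw [hWP, ncard_coe_submodule hF] at hzeros
  have hrank : finrank F P = m := by
    have := Nat.pow_right_injective hq.le hzeros
    omega
  refine ⟨P, hrank, ⟨hq, hF, hf, hPW, hrank ▸ hm, hrank ▸ hW, ?_, hP, hcompl, fun U hU => ?_⟩⟩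
  · rw [Fintype.card_fin, hrank]
    exact hn
  · by_contra! hzero
    refine hsub ⟨U, hU.trans hW, fun p hp => hzero _ (hp ?_)⟩
    exact p.submodule_eq ▸ Submodule.mem_span_singleton_self p.rep

end HermitianCount

theorem stmt_10_general {F : Type} [Field F] [Fintype F] {m q : ℕ} (hm : 2 ≤ m) (hq : 2 < q)
    (hF : Fintype.card F = q ^ 2) {f : MvPolynomial (Fin (2 * m + 1)) F}
    (hf : f.IsHomogeneous (q + 1))
    (hsub : ¬ ∃ U : Submodule F (Fin (2 * m + 1) → F),
      finrank F U = m + 1 ∧ projPts U ⊆ hypersurfacePts f)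
    (hcard : (hypersurfacePts f).ncard =
      (q ^ (2 * m + 1) + 1) * ∑ i ∈ Finset.range m, q ^ (2 * i))
    {W : Submodule F (Fin (2 * m + 1) → F)} (hW : finrank F W = m + 1)
    (hint : (hypersurfacePts f ∩ projPts W).ncard = ∑ i ∈ Finset.range m, q ^ (2 * i))
    {U : Submodule F (Fin (2 * m + 1) → F)} (hU : finrank F U = m + 2) (hWU : W ≤ U) :
    IsHermitianConeOn q U (m - 1) (hypersurfacePts f ∩ projPts U) ∧
      (hypersurfacePts f ∩ projPts U).ncard =
        q ^ (2 * m + 1) + ∑ i ∈ Finset.range m, q ^ (2 * i) := by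
  obtain ⟨P, hP, H⟩ := exists_isHermitianFlag hm hq rfl hF hf hsub hcard hW hint
  have hUW : finrank F U = finrank F W + 1 := by rw [hU, hW]
  have hcone := H.isHermitianConeOn hWU hUW
  have hcount := H.ncard_hypersurfacePts_inter hWU hUW
  rw [hP] at hcone hcount
  exact ⟨hcone, hcount⟩

/-- Under the hypotheses of the main theorem, every `4`-space `Σ₄` through the special
solid `Σ₃` meets `S` in a Hermitian cone with vertex a line and base a non-singular
Hermitian curve; in particular `|S ∩ Σ₄| = q⁷ + q⁴ + q² + 1`. -/
theorem stmt_10 (q : ℕ) (hq : ∃ p k : ℕ, p.Prime ∧ 0 < k ∧ q = p ^ k) (hq2 : 2 < q)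
    (F : Type) [Field F] [Fintype F] (hcardF : Fintype.card F = q ^ 2)
    (f : MvPolynomial (Fin 7) F) (hf0 : f ≠ 0) (hfdeg : f.IsHomogeneous (q + 1))
    (S : Set (Projectivization F (Fin 7 → F))) (hS : S = hypersurfacePts f)
    (hnosolid : ¬ ∃ W : Submodule F (Fin 7 → F), Module.finrank F W = 4 ∧ projPts W ⊆ S)
    (hcardS : S.ncard = q ^ 11 + q ^ 9 + q ^ 7 + q ^ 4 + q ^ 2 + 1)
    (W₃ : Submodule F (Fin 7 → F)) (hW₃ : Module.finrank F W₃ = 4)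
    (hint : (S ∩ projPts W₃).ncard = q ^ 4 + q ^ 2 + 1) :
    ∀ W₄ : Submodule F (Fin 7 → F), Module.finrank F W₄ = 5 → W₃ ≤ W₄ →
      IsHermitianConeOn q W₄ 2 (S ∩ projPts W₄) ∧
      (S ∩ projPts W₄).ncard = q ^ 7 + q ^ 4 + q ^ 2 + 1 := by
  intro W₄ hW₄ hle
  have hsum : ∑ i ∈ Finset.range 3, q ^ (2 * i) = q ^ 4 + q ^ 2 + 1 := by
    simp only [Finset.sum_range_succ, Finset.sum_range_zero]
    ring
  have hcard : (hypersurfacePts f).ncard =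
      (q ^ (2 * 3 + 1) + 1) * ∑ i ∈ Finset.range 3, q ^ (2 * i) := by
    rw [← hS, hcardS, hsum]
    ring
  subst hS
  have h := stmt_10_general (m := 3) (by norm_num) hq2 hcardF hfdeg hnosolid hcard hW₃
    (hint.trans hsum.symm) hW₄ hle
  refine ⟨h.1, h.2.trans ?_⟩
  rw [hsum]
  ring
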